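/- arXiv:1203.0854 — 5 statements merged into one kernel-verified Lean document; each statement's English description precedes it below -/
import Mathlib

section
/- For all positive integers a, b with gcd(a,b) = 1, there exists a natural number j such that (a,b) is an entry of the list L_j. (Every primitive lattice direction in the open first quadrant is eventually reached by the iterated mediant insertions; equivalently, every ray in the first quadrant eventually occurs in the fan of some X_j.) -/
/-- Mediant insertion: between each pair of consecutive entries insert their sum. -/
def mediantInsert : List (ℤ × ℤ) → List (ℤ × ℤ)
  | [] => []
  | [a] => [a]
  | a :: b :: t => a :: (a + b) :: mediantInsert (b :: t)

/-- The list `L_j`: `L_0 = [(1,0),(0,1)]` and `L_{j+1}` is obtained from `L_j` by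
mediant insertion.  `L_j` encodes the rays of the fan of the toric surface `X_j`
lying in the closed first quadrant, where `X_0 = ℂP¹ × ℂP¹` and `X_{j+1}` is the
blow-up of `X_j` at all of its torus fixed points. -/
def rayList : ℕ → List (ℤ × ℤ)
  | 0 => [(1, 0), (0, 1)]
  | j + 1 => mediantInsert (rayList j)

/-- The set `S_j = { (ε₁·a, ε₂·b) : (a,b) an entry of L_j, ε₁, ε₂ ∈ {1,−1} }`, the set
of primitive generators of the rays of the fan of the toric surface `X_j`. -/
def raySet (j : ℕ) : Set (ℤ × ℤ) :=
  {p | ∃ q ∈ rayList j, ∃ ε₁ ε₂ : ℤ, (ε₁ = 1 ∨ ε₁ = -1) ∧ (ε₂ = 1 ∨ ε₂ = -1) ∧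
    p = (ε₁ * q.1, ε₂ * q.2)}

theorem mediantInsert_cons_head (v : ℤ × ℤ) (r : List (ℤ × ℤ)) :
    ∃ r', mediantInsert (v :: r) = v :: r' := by
  cases r with
  | nil => exact ⟨[], by simp [mediantInsert]⟩
  | cons w t => exact ⟨_, by rw [mediantInsert]⟩

theorem mediantInsert_consecutive (u v : ℤ × ℤ) (r : List (ℤ × ℤ)) :
    ∀ l : List (ℤ × ℤ), ∃ l' r',
      mediantInsert (l ++ u :: v :: r) = l' ++ u :: (u + v) :: v :: r' := by
  intro l
  induction l with
  | nil =>
    obtain ⟨r', h⟩ := mediantInsert_cons_head v r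
    exact ⟨[], r', by simp [mediantInsert, h]⟩
  | cons a t ih =>
    obtain ⟨l', r', h⟩ := ih
    cases t with
    | nil =>
      refine ⟨a :: (a + u) :: l', r', ?_⟩
      simp only [List.nil_append, List.cons_append] at h ⊢
      rw [mediantInsert, h]
    | cons b s =>
      refine ⟨a :: (a + b) :: l', r', ?_⟩
      simp only [List.cons_append] at h ⊢
      rw [mediantInsert, h]

theorem rayList_mem_of_consecutive (N : ℕ) : ∀ (m n : ℤ), 0 < m → 0 < n → m + n ≤ N →
    Int.gcd m n = 1 → ∀ (j : ℕ) (u v : ℤ × ℤ) (l r : List (ℤ × ℤ)),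
      rayList j = l ++ u :: v :: r → ∃ k, m • u + n • v ∈ rayList k := by
  induction N with
  | zero => intro m n hm hn h; simp at h; omega
  | succ N ih =>
    intro m n hm hn hN hg j u v l r hj
    obtain ⟨l', r', h⟩ := mediantInsert_consecutive u v r l
    have h1 : rayList (j + 1) = l' ++ u :: (u + v) :: v :: r' := by
      rw [rayList, hj, h]
    push_cast at hN
    rcases lt_trichotomy m n with hlt | heq | hgt
    · obtain ⟨k, hk⟩ := ih m (n - m) hm (by omega) (by omega)
        (by simpa using hg) (j + 1) (u + v) v (l' ++ [u]) r' (by simp [h1])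
      refine ⟨k, ?_⟩
      convert hk using 1
      module
    · subst heq
      have : m = 1 := by
        rw [Int.gcd_self] at hg
        omega
      subst this
      exact ⟨j + 1, by simp [h1]⟩
    · obtain ⟨k, hk⟩ := ih (m - n) n (by omega) hn (by omega)
        (by simpa using hg) (j + 1) u (u + v) l' (v :: r') h1
      refine ⟨k, ?_⟩
      convert hk using 1
      module

/-- For all positive integers `a, b` with `gcd(a,b) = 1` there is a
natural number `j` such that `(a,b)` is an entry of `L_j`: every primitive lattice
direction in the open first quadrant is eventually reached by the iterated mediant
insertions. -/
theorem exists_rayList_mem (a b : ℤ) (ha : 0 < a) (hb : 0 < b)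
    (hab : Int.gcd a b = 1) : ∃ j : ℕ, (a, b) ∈ rayList j := by
  obtain ⟨k, hk⟩ := rayList_mem_of_consecutive (a + b).toNat a b ha hb (by omega) hab
    0 (1, 0) (0, 1) [] [] rfl
  exact ⟨k, by simpa using hk⟩
end

section
/- Let n ≥ 1 and let R ⊆ ℤ² be obtained from Σ_n = {(0,−1),(1,0),(0,1),(−1,−n)} by a sequence of m toric blow-up steps. Then at least one of the following holds: (i) R can also be obtained from Σ_{n−1} = {(0,−1),(1,0),(0,1),(−1,−(n−1))} by a sequence of m toric blow-up steps; or (ii) there exists one further toric blow-up step taking R to a set R' such that R' can be obtained from Σ_{n−1} by a sequence of m+1 toric blow-up steps. -/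
/-- The determinant `det(v,w) = v₁w₂ − v₂w₁` of a pair of lattice vectors. -/
def latDet (v w : ℤ × ℤ) : ℤ := v.1 * w.2 - v.2 * w.1

/-- `v, w ∈ S` form an adjacent pair of the fan with ray set `S` if `det(v,w) > 0` and
no element of `S` lies in the open cone `{αv + βw : α > 0, β > 0, α, β ∈ ℝ}`. -/
def AdjacentPair (S : Set (ℤ × ℤ)) (v w : ℤ × ℤ) : Prop :=
  v ∈ S ∧ w ∈ S ∧ 0 < latDet v w ∧
    ∀ u ∈ S, ¬ ∃ α β : ℝ, 0 < α ∧ 0 < β ∧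
      (u.1 : ℝ) = α * v.1 + β * w.1 ∧ (u.2 : ℝ) = α * v.2 + β * w.2

/-- A toric blow-up step replaces the ray set `S` by `S ∪ {v+w}` for an adjacent pair
`(v,w)` of `S`; this is the fan-level description of blowing up the torus fixed point
corresponding to the two-dimensional cone spanned by `v` and `w`. -/
def BlowUpStep (S T : Set (ℤ × ℤ)) : Prop :=
  ∃ v w : ℤ × ℤ, AdjacentPair S v w ∧ T = S ∪ {v + w}

/-- `BlowUpSeq m S T` means `T` is obtained from `S` by a sequence of `m` toric
blow-up steps. -/
def BlowUpSeq : ℕ → Set (ℤ × ℤ) → Set (ℤ × ℤ) → Prop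
  | 0, S, T => T = S
  | m + 1, S, T => ∃ R : Set (ℤ × ℤ), BlowUpSeq m S R ∧ BlowUpStep R T

/-- `Σ_n = {(0,−1),(1,0),(0,1),(−1,−n)}`, the set of ray generators of the fan of the
Hirzebruch surface `F_n` (with `F_0 = ℂP¹ × ℂP¹`). -/
def hirzebruchFan (n : ℕ) : Set (ℤ × ℤ) :=
  {(0, -1), (1, 0), (0, 1), (-1, -(n : ℤ))}

/-- Membership in the open cone, expressed with determinants. -/
theorem inCone_iff (v w u : ℤ × ℤ) (h : 0 < latDet v w) :
    (∃ α β : ℝ, 0 < α ∧ 0 < β ∧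
      (u.1 : ℝ) = α * v.1 + β * w.1 ∧ (u.2 : ℝ) = α * v.2 + β * w.2) ↔
    0 < latDet v u ∧ 0 < latDet u w := by
  have hR : (0 : ℝ) < v.1 * w.2 - v.2 * w.1 := by
    unfold latDet at h; exact_mod_cast h
  constructor
  · rintro ⟨α, β, hα, hβ, h1, h2⟩
    have e1 : ((latDet v u : ℤ) : ℝ) = β * (v.1 * w.2 - v.2 * w.1) := by
      unfold latDet; push_cast; rw [h1, h2]; ring
    have e2 : ((latDet u w : ℤ) : ℝ) = α * (v.1 * w.2 - v.2 * w.1) := by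
      unfold latDet; push_cast; rw [h1, h2]; ring
    constructor
    · have : (0 : ℝ) < (latDet v u : ℤ) := by rw [e1]; positivity
      exact_mod_cast this
    · have : (0 : ℝ) < (latDet u w : ℤ) := by rw [e2]; positivity
      exact_mod_cast this
  · rintro ⟨h1, h2⟩
    have h1' : (0 : ℝ) < (latDet v u : ℤ) := by exact_mod_cast h1
    have h2' : (0 : ℝ) < (latDet u w : ℤ) := by exact_mod_cast h2
    refine ⟨(latDet u w : ℤ) / (v.1 * w.2 - v.2 * w.1),
      (latDet v u : ℤ) / (v.1 * w.2 - v.2 * w.1), by positivity, by positivity, ?_, ?_⟩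
    · rw [div_mul_eq_mul_div, div_mul_eq_mul_div, ← add_div, eq_div_iff hR.ne']
      unfold latDet; push_cast; ring
    · rw [div_mul_eq_mul_div, div_mul_eq_mul_div, ← add_div, eq_div_iff hR.ne']
      unfold latDet; push_cast; ring

theorem adjacentPair_iff (S : Set (ℤ × ℤ)) (v w : ℤ × ℤ) :
    AdjacentPair S v w ↔ v ∈ S ∧ w ∈ S ∧ 0 < latDet v w ∧
      ∀ u ∈ S, ¬ (0 < latDet v u ∧ 0 < latDet u w) := by
  unfold AdjacentPair
  constructor
  · rintro ⟨h1, h2, h3, h4⟩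
    exact ⟨h1, h2, h3, fun u hu => by rw [← inCone_iff v w u h3]; exact h4 u hu⟩
  · rintro ⟨h1, h2, h3, h4⟩
    exact ⟨h1, h2, h3, fun u hu => by rw [inCone_iff v w u h3]; exact h4 u hu⟩

theorem latDet_pluecker (v a p w : ℤ × ℤ) :
    latDet a w * latDet v p = latDet v a * latDet p w + latDet v w * latDet a p := by
  unfold latDet; ring

theorem latDet_anti (v w : ℤ × ℤ) : latDet w v = - latDet v w := by
  unfold latDet; ring

/-- The vectors of `S` are pairwise not positively proportional. -/
def NonProp (S : Set (ℤ × ℤ)) : Prop :=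
  ∀ x ∈ S, ∀ y ∈ S, latDet x y = 0 → (∃ p, 0 < latDet x p ∧ 0 < latDet y p) → x = y

theorem first_det_nonpos {S : Set (ℤ × ℤ)} {v w a p : ℤ × ℤ}
    (h : AdjacentPair S v w) (ha : a ∈ S)
    (h1 : 0 < latDet v p) (h2 : 0 < latDet p w) (h3 : 0 < latDet a p) :
    latDet v a ≤ 0 := by
  rw [adjacentPair_iff] at h
  obtain ⟨-, -, hd, hn⟩ := h
  by_contra! hc
  refine hn a ha ⟨hc, ?_⟩
  have e := latDet_pluecker v a p w
  have : 0 < latDet a w * latDet v p := by rw [e]; positivity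
  exact pos_of_mul_pos_left this h1.le

theorem second_det_nonpos {S : Set (ℤ × ℤ)} {v w b p : ℤ × ℤ}
    (h : AdjacentPair S v w) (hb : b ∈ S)
    (h1 : 0 < latDet v p) (h2 : 0 < latDet p w) (h3 : 0 < latDet p b) :
    latDet b w ≤ 0 := by
  rw [adjacentPair_iff] at h
  obtain ⟨-, -, hd, hn⟩ := h
  by_contra! hc
  refine hn b hb ⟨?_, hc⟩
  have e : latDet v b * latDet p w = latDet b w * latDet v p + latDet v w * latDet p b := by
    unfold latDet; ring
  have : 0 < latDet v b * latDet p w := by rw [e]; positivity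
  exact pos_of_mul_pos_left this h2.le

/-- Adjacent pairs whose open cones meet coincide. -/
theorem adjacent_unique {S : Set (ℤ × ℤ)} (hS : NonProp S) {v w a b p : ℤ × ℤ}
    (h : AdjacentPair S v w) (h' : AdjacentPair S a b)
    (h1 : 0 < latDet v p) (h2 : 0 < latDet p w) (h3 : 0 < latDet a p) (h4 : 0 < latDet p b) :
    v = a ∧ w = b := by
  have i1 := first_det_nonpos h h'.1 h1 h2 h3
  have i2 := first_det_nonpos h' h.1 h3 h4 h1
  have i3 := second_det_nonpos h h'.2.1 h1 h2 h4
  have i4 := second_det_nonpos h' h.2.1 h3 h4 h2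
  rw [latDet_anti] at i2 i4
  constructor
  · exact hS v h.1 a h'.1 (by omega) ⟨p, h1, h3⟩
  · refine hS w h.2.1 b h'.2.1 ?_ ⟨-p, ?_, ?_⟩
    · rw [latDet_anti]; omega
    · have : latDet w (-p) = latDet p w := by simp [latDet]; ring
      rw [this]; exact h2
    · have : latDet b (-p) = latDet p b := by simp [latDet]; ring
      rw [this]; exact h4

theorem latDet_add_right (v w : ℤ × ℤ) : latDet v (v + w) = latDet v w := by
  simp [latDet]; ring

theorem latDet_add_left (v w : ℤ × ℤ) : latDet (v + w) w = latDet v w := by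
  simp [latDet]; ring

theorem NonProp.step {S : Set (ℤ × ℤ)} (hS : NonProp S) {v w : ℤ × ℤ}
    (h : AdjacentPair S v w) : NonProp (S ∪ {v + w}) := by
  have key : ∀ x ∈ S, latDet x (v + w) = 0 →
      (∃ p, 0 < latDet x p ∧ 0 < latDet (v + w) p) → False := by
    rintro x hx h0 ⟨p, hp1, hp2⟩
    rw [adjacentPair_iff] at h
    obtain ⟨-, -, hd, hn⟩ := h
    apply hn x hx
    constructor
    · have e : latDet v x * latDet (v + w) p =
          latDet v w * latDet x p - latDet x (v + w) * latDet v p := by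
        simp only [latDet, Prod.fst_add, Prod.snd_add]; ring
      have : 0 < latDet v x * latDet (v + w) p := by
        rw [e, h0, zero_mul, sub_zero]; positivity
      exact pos_of_mul_pos_left this hp2.le
    · have e : latDet x w * latDet (v + w) p =
          latDet v w * latDet x p - latDet x (v + w) * latDet w p * (-1) := by
        simp only [latDet, Prod.fst_add, Prod.snd_add]; ring
      have : 0 < latDet x w * latDet (v + w) p := by
        rw [e, h0, zero_mul, zero_mul, sub_zero]; positivity
      exact pos_of_mul_pos_left this hp2.le
  rintro x (hx | rfl) y (hy | rfl) h0 ⟨p, hp1, hp2⟩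
  · exact hS x hx y hy h0 ⟨p, hp1, hp2⟩
  · exact (key x hx h0 ⟨p, hp1, hp2⟩).elim
  · exact (key y hy (by rw [latDet_anti, h0, neg_zero]) ⟨p, hp2, hp1⟩).elim
  · rfl

theorem adjacent_union {S : Set (ℤ × ℤ)} {v w u : ℤ × ℤ} (h : AdjacentPair S v w)
    (hu : ¬ (0 < latDet v u ∧ 0 < latDet u w)) : AdjacentPair (S ∪ {u}) v w := by
  rw [adjacentPair_iff] at h ⊢
  obtain ⟨h1, h2, h3, h4⟩ := h
  refine ⟨Or.inl h1, Or.inl h2, h3, ?_⟩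
  rintro x (hx | rfl)
  · exact h4 x hx
  · exact hu

theorem invariant (k : ℕ) (m : ℕ) : ∀ R : Set (ℤ × ℤ), BlowUpSeq m (hirzebruchFan (k + 1)) R →
    BlowUpSeq m (hirzebruchFan k) R ∨
    (NonProp R ∧ AdjacentPair R (0, 1) (-1, -((k : ℤ) + 1)) ∧
      BlowUpSeq (m + 1) (hirzebruchFan k) (R ∪ {(0, 1) + (-1, -((k : ℤ) + 1))})) := by
  induction m with
  | zero =>
    rintro R rfl
    right
    refine ⟨?_, ?_, hirzebruchFan k, rfl, (-1, -(k : ℤ)), (0, -1), ?_, ?_⟩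
    · intro x hx y hy h0 ⟨p, hp⟩
      simp only [hirzebruchFan, Set.mem_insert_iff, Set.mem_singleton_iff] at hx hy
      rcases hx with rfl | rfl | rfl | rfl <;> rcases hy with rfl | rfl | rfl | rfl <;>
        simp [latDet] at h0 hp ⊢ <;> omega
    · rw [adjacentPair_iff]
      refine ⟨by simp [hirzebruchFan], by simp [hirzebruchFan], by simp [latDet], ?_⟩
      intro x hx
      simp only [hirzebruchFan, Set.mem_insert_iff, Set.mem_singleton_iff] at hx
      rcases hx with rfl | rfl | rfl | rfl <;> simp [latDet] 
    · rw [adjacentPair_iff]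
      refine ⟨by simp [hirzebruchFan], by simp [hirzebruchFan], by simp [latDet], ?_⟩
      intro x hx
      simp only [hirzebruchFan, Set.mem_insert_iff, Set.mem_singleton_iff] at hx
      rcases hx with rfl | rfl | rfl | rfl <;> simp [latDet] 
    · have e1 : ((0, 1) : ℤ × ℤ) + (-1, -((k : ℤ) + 1)) = (-1, -(k : ℤ)) := by
        ext <;> simp
      have e2 : ((-1, -(k : ℤ)) : ℤ × ℤ) + (0, -1) = (-1, -((k : ℤ) + 1)) := by
        ext <;> simp; ring
      rw [e1, e2]
      ext x
      simp only [hirzebruchFan, Set.mem_union, Set.mem_insert_iff, Set.mem_singleton_iff]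
      push_cast
      tauto
  | succ m ih =>
    rintro T ⟨R, hR, v, w, hvw, rfl⟩
    rcases ih R hR with hA | ⟨hN, hab, hB⟩
    · exact Or.inl ⟨R, hA, v, w, hvw, rfl⟩
    · by_cases hp : v = (0, 1) ∧ w = (-1, -((k : ℤ) + 1))
      · left
        obtain ⟨rfl, rfl⟩ := hp
        exact hB
      · right
        refine ⟨hN.step hvw, adjacent_union hab ?_, _, hB, v, w, adjacent_union hvw ?_, ?_⟩
        · rintro ⟨h1, h2⟩
          refine hp (adjacent_unique hN hvw hab (p := v + w) ?_ ?_ h1 h2)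
          · rw [latDet_add_right]; exact hvw.2.2.1
          · rw [latDet_add_left]; exact hvw.2.2.1
        · rintro ⟨h1, h2⟩
          refine hp (adjacent_unique hN hvw hab h1 h2 ?_ ?_)
          · rw [latDet_add_right]; exact hab.2.2.1
          · rw [latDet_add_left]; exact hab.2.2.1
        · rw [Set.union_right_comm]


/-- Let `n ≥ 1` and let `R` be obtained from `Σ_n` by a sequence of `m`
toric blow-up steps.  Then either `R` can also be obtained from `Σ_{n−1}` by a sequence
of `m` toric blow-up steps, or one further toric blow-up step takes `R` to a set `R'`
that can be obtained from `Σ_{n−1}` by a sequence of `m+1` toric blow-up steps. -/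
theorem blowup_of_hirzebruch_descends (n : ℕ) (hn : 1 ≤ n) (m : ℕ) (R : Set (ℤ × ℤ))
    (hR : BlowUpSeq m (hirzebruchFan n) R) :
    BlowUpSeq m (hirzebruchFan (n - 1)) R ∨
      ∃ R' : Set (ℤ × ℤ), BlowUpStep R R' ∧ BlowUpSeq (m + 1) (hirzebruchFan (n - 1)) R' := by
  obtain ⟨k, rfl⟩ : ∃ k, n = k + 1 := ⟨n - 1, by omega⟩
  rw [Nat.add_sub_cancel]
  rcases invariant k m R hR with h | ⟨-, hab, hB⟩
  · exact Or.inl h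
  · exact Or.inr ⟨_, ⟨_, _, hab, rfl⟩, hB⟩
end

section
/- Let S ⊆ ℤ² be a smooth complete fan, i.e., a finite set of at least three pairwise non-proportional primitive vectors which, when listed in cyclic angular order v_0, v_1, …, v_{d−1}, v_d = v_0, satisfies det(v_i, v_{i+1}) = (v_i)₁(v_{i+1})₂ − (v_i)₂(v_{i+1})₁ = 1 for all i. Then there exists a matrix A ∈ GL₂(ℤ) such that A·S (the image of S under A) is obtained by a finite sequence of toric blow-up steps from either {(1,0),(0,1),(−1,−1)} (the ray set of the fan of ℂP²) or from Σ_n = {(0,−1),(1,0),(0,1),(−1,−n)} for some n ≥ 0 (the ray set of the fan of the Hirzebruch surface F_n). (Fan-level statement of: every smooth compact toric surface is an iterated toric blow-up of ℂP² or of a Hirzebruch surface.) -/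
/-- `S ⊆ ℤ²` is (the ray set of) a smooth complete fan: its elements can be listed,
without repetition and with at least three of them, in cyclic angular order
`v_0, v_1, …, v_{d−1}, v_d = v_0` such that each cyclically consecutive pair spans a
unimodular cone, `det(v_i, v_{i+1}) = 1`, and is an adjacent pair of `S` (no element
of `S` lies in the open cone it spans, which expresses that the listing is in cyclic
angular order, winding exactly once around the origin). -/
def IsSmoothCompleteFan (S : Set (ℤ × ℤ)) : Prop :=
  ∃ l : List (ℤ × ℤ), l.Nodup ∧ 3 ≤ l.length ∧ (∀ x, x ∈ S ↔ x ∈ l) ∧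
    ∀ p ∈ l.zip (l.rotate 1), latDet p.1 p.2 = 1 ∧ AdjacentPair S p.1 p.2

/-- The action of a `2 × 2` integer matrix on `ℤ²`. -/
def matVec (A : Matrix (Fin 2) (Fin 2) ℤ) (p : ℤ × ℤ) : ℤ × ℤ :=
  (A 0 0 * p.1 + A 0 1 * p.2, A 1 0 * p.1 + A 1 1 * p.2)

/-- Integral version of adjacency, with unimodularity. -/
def FAdj (S : Set (ℤ × ℤ)) (v w : ℤ × ℤ) : Prop :=
  v ∈ S ∧ w ∈ S ∧ latDet v w = 1 ∧ ∀ u ∈ S, ¬ (0 < latDet v u ∧ 0 < latDet u w)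

/-- Local form of being a smooth complete fan. -/
def FGood (S : Set (ℤ × ℤ)) : Prop :=
  S.Finite ∧ S.Nonempty ∧ (∀ v ∈ S, ∃ w, FAdj S v w) ∧ (∀ w ∈ S, ∃ v, FAdj S v w)

/-- No ray can be contracted. -/
def NoBD (S : Set (ℤ × ℤ)) : Prop :=
  ∀ p v s, FAdj S p v → FAdj S v s → latDet p s ≠ 1

/-- The conclusion, with matrices of determinant one. -/
def FConcl (S : Set (ℤ × ℤ)) : Prop :=
  ∃ A : Matrix (Fin 2) (Fin 2) ℤ, A.det = 1 ∧
      ((∃ m : ℕ, BlowUpSeq m ({(1, 0), (0, 1), (-1, -1)} : Set (ℤ × ℤ)) (matVec A '' S)) ∨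
        ∃ n m : ℕ, BlowUpSeq m (hirzebruchFan n) (matVec A '' S))

theorem cone_iff (u v w : ℤ × ℤ) (h : 0 < latDet v w) :
    (∃ α β : ℝ, 0 < α ∧ 0 < β ∧
      (u.1 : ℝ) = α * v.1 + β * w.1 ∧ (u.2 : ℝ) = α * v.2 + β * w.2) ↔
    (0 < latDet v u ∧ 0 < latDet u w) := by
  have hD : (0 : ℝ) < (latDet v w : ℤ) := by exact_mod_cast h
  constructor
  · rintro ⟨α, β, ha, hb, h1, h2⟩
    have e1 : ((latDet v u : ℤ) : ℝ) = β * (latDet v w : ℤ) := by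
      simp only [latDet]; push_cast; rw [h1, h2]; ring
    have e2 : ((latDet u w : ℤ) : ℝ) = α * (latDet v w : ℤ) := by
      simp only [latDet]; push_cast; rw [h1, h2]; ring
    have p1 : (0 : ℝ) < (latDet v u : ℤ) := by rw [e1]; positivity
    have p2 : (0 : ℝ) < (latDet u w : ℤ) := by rw [e2]; positivity
    exact ⟨by exact_mod_cast p1, by exact_mod_cast p2⟩
  · rintro ⟨h1, h2⟩
    have p1 : (0 : ℝ) < (latDet v u : ℤ) := by exact_mod_cast h1
    have p2 : (0 : ℝ) < (latDet u w : ℤ) := by exact_mod_cast h2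
    refine ⟨(latDet u w : ℤ) / (latDet v w : ℤ), (latDet v u : ℤ) / (latDet v w : ℤ),
      by positivity, by positivity, ?_, ?_⟩
    · rw [div_mul_eq_mul_div, div_mul_eq_mul_div, ← add_div, eq_div_iff hD.ne']
      simp only [latDet]; push_cast; ring
    · rw [div_mul_eq_mul_div, div_mul_eq_mul_div, ← add_div, eq_div_iff hD.ne']
      simp only [latDet]; push_cast; ring

theorem FAdj.adjacent {S : Set (ℤ × ℤ)} {v w : ℤ × ℤ} (h : FAdj S v w) :
    AdjacentPair S v w := by
  obtain ⟨h1, h2, h3, h4⟩ := h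
  have h0 : 0 < latDet v w := by omega
  exact ⟨h1, h2, h0, fun u hu hc => h4 u hu ((cone_iff u v w h0).1 hc)⟩

theorem AdjacentPair.fadj {S : Set (ℤ × ℤ)} {v w : ℤ × ℤ} (h : AdjacentPair S v w)
    (h1 : latDet v w = 1) : FAdj S v w := by
  obtain ⟨a, b, c, d⟩ := h
  exact ⟨a, b, h1, fun u hu hc => d u hu ((cone_iff u v w c).2 hc)⟩

theorem good_of_fan {S : Set (ℤ × ℤ)} (hS : IsSmoothCompleteFan S) : FGood S := by
  obtain ⟨l, hnd, hlen, hmem, hadj⟩ := hS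
  have key : ∀ (i : ℕ) (hi : i < l.length) (hi' : i < (l.rotate 1).length),
      FAdj S l[i] (l.rotate 1)[i] := by
    intro i hi hi'
    have hz : (l[i], (l.rotate 1)[i]) ∈ l.zip (l.rotate 1) := by
      rw [List.mem_iff_getElem]
      exact ⟨i, by simp [List.length_zip]; omega, by simp [List.getElem_zip]⟩
    have := hadj _ hz
    exact this.2.fadj this.1
  refine ⟨?_, ?_, ?_, ?_⟩
  · have : S = {x | x ∈ l} := by ext x; exact hmem x
    rw [this]; exact List.finite_toSet l
  · exact ⟨l[0], (hmem _).2 (List.getElem_mem _)⟩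
  · intro v hv
    obtain ⟨i, hi, rfl⟩ := List.mem_iff_getElem.1 ((hmem v).1 hv)
    exact ⟨_, key i hi (by simpa using hi)⟩
  · intro w hw
    have hw' : w ∈ l.rotate 1 := List.mem_rotate.2 ((hmem w).1 hw)
    obtain ⟨i, hi, rfl⟩ := List.mem_iff_getElem.1 hw'
    exact ⟨_, key i (by simpa using hi) hi⟩

theorem lat_ext {x y : ℤ × ℤ} {v w : ℤ × ℤ} (h : latDet v w = 1)
    (h1 : latDet v x = latDet v y) (h2 : latDet x w = latDet y w) : x = y := by
  have e : ∀ z : ℤ × ℤ, z = (latDet z w * v.1 + latDet v z * w.1,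
      latDet z w * v.2 + latDet v z * w.2) := by
    intro z
    simp only [latDet] at h ⊢
    ext
    · simp only; linear_combination (-z.1) * h
    · simp only; linear_combination (-z.2) * h
  rw [e x, e y, h1, h2]

/-- Parallel elements of `S` in the same direction coincide. -/
theorem par_eq {S : Set (ℤ × ℤ)} (hS : FGood S) {x v p : ℤ × ℤ} (hx : x ∈ S)
    (hpv : latDet p v = 1) (h0 : latDet x v = 0) (hpos : 0 < latDet p x) : x = v := by
  obtain ⟨w, hw⟩ := hS.2.2.1 x hx
  have h1 := hw.2.2.1
  have e : latDet p x * latDet v w = 1 := by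
    have : latDet p x * latDet v w = latDet x w * latDet p v - latDet x v * latDet p w := by
      simp only [latDet]; ring
    rw [this, h0, h1, hpv]; ring
  have : latDet p x = 1 := by
    rcases Int.eq_one_or_neg_one_of_mul_eq_one e with h | h <;> omega
  exact lat_ext hpv (by rw [this, hpv]) (by rw [h0]; simp only [latDet]; ring)

theorem latDet_swap (x y : ℤ × ℤ) : latDet x y = - latDet y x := by
  simp only [latDet]; ring

/-- Elements of `S` on the same ray coincide. -/
theorem par_eq' {S : Set (ℤ × ℤ)} (hS : FGood S) {x v s : ℤ × ℤ} (hx : x ∈ S)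
    (hpv : latDet v s = 1) (h0 : latDet x v = 0) (hpos : 0 < latDet x s) : x = v := by
  refine par_eq (p := (-s.1, -s.2)) hS hx ?_ h0 ?_
  · simp only [latDet] at *; linarith
  · simp only [latDet] at *; linarith

theorem succ_unique {S : Set (ℤ × ℤ)} {v w w' : ℤ × ℤ} (h : FAdj S v w)
    (h' : FAdj S v w') : w = w' := by
  obtain ⟨a, b, c, d⟩ := h
  obtain ⟨a', b', c', d'⟩ := h'
  have h1 := d w' b'
  have h2 := d' w b
  rw [latDet_swap w' w] at h1
  have : latDet w w' = 0 := by omega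
  refine lat_ext c (by omega) ?_
  rw [latDet_swap w' w, this]; simp only [latDet]; ring

theorem pred_unique {S : Set (ℤ × ℤ)} {v v' w : ℤ × ℤ} (h : FAdj S v w)
    (h' : FAdj S v' w) : v = v' := by
  obtain ⟨a, b, c, d⟩ := h
  obtain ⟨a', b', c', d'⟩ := h'
  have h1 := d v' a'
  have h2 := d' v a
  rw [latDet_swap v' v] at h2
  have : latDet v v' = 0 := by omega
  refine lat_ext c ?_ (by omega)
  rw [this]; simp only [latDet]; ring

/-- The sum relation. -/
theorem sum_rel {p v s : ℤ × ℤ} (h1 : latDet p v = 1) (h2 : latDet v s = 1) :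
    p.1 + s.1 = latDet p s * v.1 ∧ p.2 + s.2 = latDet p s * v.2 := by
  simp only [latDet] at *
  constructor
  · linear_combination (-s.1) * h1 + (-p.1) * h2
  · linear_combination (-s.2) * h1 + (-p.2) * h2

/-- Contracting a ray. -/
theorem blowdown {S : Set (ℤ × ℤ)} (hS : FGood S) {p v s : ℤ × ℤ} (hpv : FAdj S p v)
    (hvs : FAdj S v s) (hps : latDet p s = 1) :
    FGood (S \ {v}) ∧ FAdj (S \ {v}) p s ∧ v = p + s := by
  have hsum := sum_rel hpv.2.2.1 hvs.2.2.1
  rw [hps, one_mul, one_mul] at hsum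
  have hv : v = p + s := by ext <;> simp [hsum]
  have hpne : p ≠ v := by
    rintro rfl; have := hpv.2.2.1; simp only [latDet] at this; linarith
  have hsne : s ≠ v := by
    rintro rfl; have := hvs.2.2.1; simp only [latDet] at this; linarith
  have hadj : FAdj (S \ {v}) p s := by
    refine ⟨⟨hpv.1, hpne⟩, ⟨hvs.2.1, hsne⟩, hps, ?_⟩
    rintro u ⟨hu, hne⟩ ⟨h1, h2⟩
    have a1 := hpv.2.2.2 u hu
    have a2 := hvs.2.2.2 u hu
    rw [latDet_swap v u] at a2
    have : latDet u v = 0 := by omega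
    exact hne (par_eq hS hu hpv.2.2.1 this h1)
  have hmono : ∀ x y, FAdj S x y → x ≠ v → y ≠ v → FAdj (S \ {v}) x y := by
    intro x y h hx hy
    exact ⟨⟨h.1, hx⟩, ⟨h.2.1, hy⟩, h.2.2.1, fun u hu => h.2.2.2 u hu.1⟩
  refine ⟨⟨hS.1.subset Set.sdiff_subset, ⟨p, hpv.1, hpne⟩, ?_, ?_⟩, hadj, hv⟩
  · rintro x ⟨hx, hxv⟩
    obtain ⟨w, hw⟩ := hS.2.2.1 x hx
    by_cases h : w = v
    · subst h
      have := pred_unique hw hpv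
      subst this
      exact ⟨s, hadj⟩
    · exact ⟨w, hmono _ _ hw hxv h⟩
  · rintro x ⟨hx, hxv⟩
    obtain ⟨w, hw⟩ := hS.2.2.2 x hx
    by_cases h : w = v
    · subst h
      have := succ_unique hw hvs
      subst this
      exact ⟨p, hadj⟩
    · exact ⟨w, hmono _ _ hw h hxv⟩

theorem matVec_latDet (A : Matrix (Fin 2) (Fin 2) ℤ) (x y : ℤ × ℤ) :
    latDet (matVec A x) (matVec A y) = A.det * latDet x y := by
  simp only [latDet, matVec, Matrix.det_fin_two]; ring

theorem matVec_add (A : Matrix (Fin 2) (Fin 2) ℤ) (x y : ℤ × ℤ) :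
    matVec A (x + y) = matVec A x + matVec A y := by
  ext <;> simp [matVec] <;> ring

theorem matVec_mul (A B : Matrix (Fin 2) (Fin 2) ℤ) (x : ℤ × ℤ) :
    matVec (A * B) x = matVec A (matVec B x) := by
  ext <;> simp [matVec, Matrix.mul_apply] <;> ring

theorem matVec_inj {A : Matrix (Fin 2) (Fin 2) ℤ} (hA : A.det = 1) :
    Function.Injective (matVec A) := by
  intro x y h
  have e : ∀ z, latDet (matVec A z) (matVec A x) = latDet z x := by
    intro z; rw [matVec_latDet, hA, one_mul]
  have e2 : ∀ z, latDet (matVec A z) (matVec A y) = latDet z y := by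
    intro z; rw [matVec_latDet, hA, one_mul]
  have f : ∀ z, latDet z x = latDet z y := by
    intro z; rw [← e, ← e2, h]
  have f1 := f (1, 0)
  have f2 := f (0, 1)
  simp only [latDet] at f1 f2
  ext <;> linarith

theorem adj_image {A : Matrix (Fin 2) (Fin 2) ℤ} (hA : A.det = 1) {S : Set (ℤ × ℤ)}
    {v w : ℤ × ℤ} : FAdj (matVec A '' S) (matVec A v) (matVec A w) ↔ FAdj S v w := by
  simp only [FAdj, (matVec_inj hA).mem_set_image, Set.forall_mem_image, matVec_latDet, hA,
    one_mul]

theorem good_image {A : Matrix (Fin 2) (Fin 2) ℤ} (hA : A.det = 1) {S : Set (ℤ × ℤ)}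
    (hS : FGood S) : FGood (matVec A '' S) := by
  obtain ⟨a, b, c, d⟩ := hS
  refine ⟨a.image _, b.image _, ?_, ?_⟩
  · rintro _ ⟨x, hx, rfl⟩
    obtain ⟨w, hw⟩ := c x hx
    exact ⟨_, (adj_image hA).2 hw⟩
  · rintro _ ⟨x, hx, rfl⟩
    obtain ⟨w, hw⟩ := d x hx
    exact ⟨_, (adj_image hA).2 hw⟩

theorem nobd_image {A : Matrix (Fin 2) (Fin 2) ℤ} (hA : A.det = 1) {S : Set (ℤ × ℤ)}
    (hS : NoBD S) : NoBD (matVec A '' S) := by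
  intro p v s h1 h2
  obtain ⟨p, hp, rfl⟩ := h1.1
  obtain ⟨v, hv, rfl⟩ := h1.2.1
  obtain ⟨s, hs, rfl⟩ := h2.2.1
  rw [matVec_latDet, hA, one_mul]
  exact hS p v s ((adj_image hA).1 h1) ((adj_image hA).1 h2)

theorem concl_image {A : Matrix (Fin 2) (Fin 2) ℤ} (hA : A.det = 1) {S : Set (ℤ × ℤ)}
    (h : FConcl (matVec A '' S)) : FConcl S := by
  obtain ⟨B, hB, h⟩ := h
  refine ⟨B * A, by rw [Matrix.det_mul, hA, hB, one_mul], ?_⟩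
  have : matVec (B * A) '' S = matVec B '' (matVec A '' S) := by
    rw [Set.image_image]; simp only [matVec_mul]
  rw [this]; exact h

/-- The chart sending `v, w` to the standard basis. -/
def chart (v w : ℤ × ℤ) : Matrix (Fin 2) (Fin 2) ℤ := !![w.2, -w.1; -v.2, v.1]

theorem chart_det {v w : ℤ × ℤ} (h : latDet v w = 1) : (chart v w).det = 1 := by
  simp only [chart, Matrix.det_fin_two_of, latDet] at *; linarith

theorem chart_apply (v w x : ℤ × ℤ) :
    matVec (chart v w) x = (latDet x w, latDet v x) := by
  ext <;> simp [chart, matVec, latDet] <;> ring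

/-- Topmost ray. -/
theorem top_ray {S : Set (ℤ × ℤ)} (hS : FGood S) (hN : NoBD S) (hu : ((1, 0) : ℤ × ℤ) ∈ S) :
    ∃ p w s, FAdj S p w ∧ FAdj S w s ∧ 0 < w.2 ∧ latDet p s ≤ 0 ∧
      ((s = (-1, 0) ∧ p = (1, 0) ∧ w.2 = 1) ∨ s.2 < 0) := by
  have hfin : {x ∈ S | 0 < x.2}.Finite := hS.1.subset (Set.sep_subset _ _)
  have hne : {x ∈ S | 0 < x.2}.Nonempty := by
    obtain ⟨w, hw⟩ := hS.2.2.1 _ hu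
    refine ⟨w, hw.2.1, ?_⟩
    have := hw.2.2.1
    simp only [latDet] at this; linarith
  obtain ⟨w, ⟨hwS, hw0⟩, hmax⟩ := Set.exists_max_image _
    (fun x : ℤ × ℤ => toLex (x.2, -x.1)) hfin hne
  obtain ⟨s, hws⟩ := hS.2.2.1 w hwS
  obtain ⟨p, hpw⟩ := hS.2.2.2 w hwS
  have hd := hws.2.2.1
  have hd' := hpw.2.2.1
  have hmax' : ∀ x ∈ S, 0 < x.2 → x.2 < w.2 ∨ (x.2 = w.2 ∧ w.1 ≤ x.1) := by
    intro x hx hx0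
    have := hmax x ⟨hx, hx0⟩
    rw [Prod.Lex.le_iff] at this
    simpa using this
  have hs : s.2 < w.2 := by
    by_contra hcon
    rcases hmax' s hws.2.1 (by omega) with h | ⟨h, h'⟩
    · omega
    · simp only [latDet] at hd
      rw [h] at hd
      nlinarith
  have hp : p.2 ≤ w.2 := by
    by_contra hcon
    rcases hmax' p hpw.1 (by omega) with h | ⟨h, h'⟩ <;> omega
  have hp0 : 0 ≤ p.2 := by
    by_contra hcon
    refine hpw.2.2.2 _ hu ⟨?_, ?_⟩ <;> simp only [latDet] <;> linarith
  obtain ⟨-, r2⟩ := sum_rel hd' hd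
  have ha := hN p w s hpw hws
  have ha0 : latDet p s ≤ 0 := by
    by_contra hcon
    have : 2 ≤ latDet p s := by omega
    nlinarith
  refine ⟨p, w, s, hpw, hws, hw0, ha0, ?_⟩
  have hs0 : s.2 ≤ 0 := by nlinarith
  rcases hs0.lt_or_eq with h | h
  · exact Or.inr h
  · left
    have hp00 : p.2 = 0 := by nlinarith
    simp only [latDet, h, hp00] at hd hd'
    have e1 : w.2 * p.1 = 1 := by linarith
    have e2 : w.2 * (-s.1) = 1 := by linarith
    have w1 : w.2 = 1 := by
      rcases Int.eq_one_or_neg_one_of_mul_eq_one e1 with h | h <;> omega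
    rw [w1] at e1 e2
    refine ⟨?_, ?_, w1⟩ <;> ext <;> simp only <;> omega

/-- Reflection in the horizontal axis. -/
def hflip (x : ℤ × ℤ) : ℤ × ℤ := (x.1, -x.2)

theorem hflip_hflip (x : ℤ × ℤ) : hflip (hflip x) = x := by simp [hflip]

theorem hflip_det (x y : ℤ × ℤ) : latDet (hflip x) (hflip y) = latDet y x := by
  simp only [hflip, latDet]; ring

theorem hflip_adj {S : Set (ℤ × ℤ)} {v w : ℤ × ℤ} :
    FAdj (hflip ⁻¹' S) v w ↔ FAdj S (hflip w) (hflip v) := by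
  have key : ∀ (P : ℤ × ℤ → Prop), (∀ u ∈ hflip ⁻¹' S, P (hflip u)) ↔ ∀ u ∈ S, P u := by
    intro P
    constructor
    · intro h u hu
      have := h (hflip u) (by simpa [hflip_hflip] using hu)
      rwa [hflip_hflip] at this
    · intro h u hu; exact h _ hu
  have := key (fun u => ¬ (0 < latDet (hflip w) u ∧ 0 < latDet u (hflip v)))
  simp only [FAdj, ← this, hflip_det, Set.mem_preimage]
  tauto

theorem bottom_ray {S : Set (ℤ × ℤ)} (hS : FGood S) (hN : NoBD S)
    (hu : ((1, 0) : ℤ × ℤ) ∈ S) :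
    ∃ p w s, FAdj S p w ∧ FAdj S w s ∧ w.2 < 0 ∧ latDet p s ≤ 0 ∧
      ((p = (-1, 0) ∧ s = (1, 0) ∧ w.2 = -1) ∨ 0 < p.2) := by
  have hS' : FGood (hflip ⁻¹' S) := by
    obtain ⟨a, ⟨b, hb⟩, c, d⟩ := hS
    refine ⟨a.preimage ?_, ⟨hflip b, by simpa [hflip_hflip] using hb⟩, ?_, ?_⟩
    · exact (Function.LeftInverse.injective hflip_hflip).injOn
    · intro v hv
      obtain ⟨w, hw⟩ := d _ hv
      exact ⟨hflip w, hflip_adj.2 (by rwa [hflip_hflip])⟩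
    · intro v hv
      obtain ⟨w, hw⟩ := c _ hv
      exact ⟨hflip w, hflip_adj.2 (by rwa [hflip_hflip])⟩
  have hN' : NoBD (hflip ⁻¹' S) := by
    intro p v s h1 h2
    rw [← hflip_det]
    exact hN _ _ _ (hflip_adj.1 h2) (hflip_adj.1 h1)
  obtain ⟨p, w, s, h1, h2, h3, h4, h5⟩ := top_ray hS' hN' (by simpa [hflip] using hu)
  refine ⟨hflip s, hflip w, hflip p, hflip_adj.1 h2, hflip_adj.1 h1, ?_, ?_, ?_⟩
  · simpa [hflip] using h3
  · rwa [hflip_det]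
  · rcases h5 with ⟨rfl, rfl, h⟩ | h
    · left; simp [hflip, h]
    · right; simpa [hflip] using h

/-- Two adjacent pairs around the direction `(-1,0)` coincide. -/
theorem pair_unique {S : Set (ℤ × ℤ)} (hS : FGood S) {w s w' s' : ℤ × ℤ}
    (h : FAdj S w s) (h' : FAdj S w' s') (hw : 0 < w.2) (hs : s.2 < 0)
    (hw' : 0 < w'.2) (hs' : s'.2 < 0) : w = w' ∧ s = s' := by
  have aux : ∀ w s w' : ℤ × ℤ, FAdj S w s → w' ∈ S → 0 < w.2 → s.2 < 0 → 0 < w'.2 →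
      0 ≤ latDet w w' → 0 < latDet w' s := by
    intro w s w' h hm hw hs hw' hle
    have e : w.2 * latDet w' s = w'.2 * latDet w s + (-s.2) * latDet w w' := by
      simp only [latDet]; ring
    rw [h.2.2.1, mul_one] at e
    have : 0 ≤ (-s.2) * latDet w w' := mul_nonneg (by omega) hle
    have : 0 < w.2 * latDet w' s := by omega
    exact pos_of_mul_pos_right this hw.le
  have a1 : ¬ 0 < latDet w w' := fun hc =>
    h.2.2.2 w' h'.1 ⟨hc, aux w s w' h h'.1 hw hs hw' hc.le⟩
  have a2 : ¬ 0 < latDet w' w := fun hc =>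
    h'.2.2.2 w h.1 ⟨hc, aux w' s' w h' h.1 hw' hs' hw hc.le⟩
  have a0 : latDet w' w = 0 := by rw [latDet_swap] at a1; omega
  have hww : w' = w := by
    refine par_eq' hS h'.1 h.2.2.1 a0 (aux w s w' h h'.1 hw hs hw' ?_)
    rw [latDet_swap]; omega
  subst hww
  exact ⟨rfl, succ_unique h h'⟩

theorem concl_p2 {S : Set (ℤ × ℤ)} (hS : FGood S) {p w s : ℤ × ℤ} (h1 : FAdj S p w)
    (h2 : FAdj S w s) (h3 : FAdj S s p) (hs : s = (-p.1 - w.1, -p.2 - w.2)) : FConcl S := by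
  have hSeq : S = {p, w, s} := by
    ext x
    simp only [Set.mem_insert_iff, Set.mem_singleton_iff]
    constructor
    · intro hx
      have c1 := h1.2.2.2 x hx
      have c2 := h2.2.2.2 x hx
      have c3 := h3.2.2.2 x hx
      have e1 : latDet x s = latDet p x - latDet x w := by
        rw [hs]; simp only [latDet]; ring
      have e2 : latDet s x = latDet x w - latDet p x := by
        rw [hs]; simp only [latDet]; ring
      have e3 := latDet_swap w x
      have e4 := latDet_swap x p
      have n0 : ¬ (latDet x w = 0 ∧ latDet p x = 0) := by
        rintro ⟨z1, z2⟩
        obtain ⟨y, hy⟩ := hS.2.2.1 x hx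
        have hx0 : x = (0, 0) := lat_ext h1.2.2.1 (by rw [z2]; simp [latDet])
          (by rw [z1]; simp [latDet])
        have := hy.2.2.1
        rw [hx0] at this
        simp [latDet] at this
      by_cases z1 : latDet x w = 0
      · right; left
        exact par_eq hS hx h1.2.2.1 z1 (by omega)
      by_cases z2 : latDet p x = 0
      · left
        exact par_eq' hS hx h1.2.2.1 (by omega) (by omega)
      right; right
      exact par_eq hS hx h2.2.2.1 (by omega) (by omega)
    · rintro (rfl | rfl | rfl)
      exacts [h1.1, h1.2.1, h2.2.1]
  refine ⟨chart p w, chart_det h1.2.2.1, Or.inl ⟨0, ?_⟩⟩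
  have d := h1.2.2.1
  have e1 : matVec (chart p w) p = (1, 0) := by
    rw [chart_apply, d]; simp [latDet]; ring
  have e2 : matVec (chart p w) w = (0, 1) := by
    rw [chart_apply, d]; simp [latDet]; ring
  have e3 : matVec (chart p w) s = (-1, -1) := by
    rw [chart_apply, hs]
    simp only [latDet] at *
    ext <;> simp only <;> linarith
  simp only [BlowUpSeq]
  rw [hSeq]
  simp only [Set.image_insert_eq, Set.image_singleton, e1, e2, e3]

theorem concl_hirz {S : Set (ℤ × ℤ)} (a b : ℤ)
    (h : S = {(1, 0), (a, 1), (-1, 0), (b, -1)}) : FConcl S := by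
  rcases le_total 0 (a + b) with hab | hab
  · refine ⟨!![0, 1; -1, a], by simp [Matrix.det_fin_two_of], Or.inr ⟨(a + b).toNat, 0, ?_⟩⟩
    simp only [BlowUpSeq, hirzebruchFan, h, Set.image_insert_eq, Set.image_singleton, matVec,
      Int.toNat_of_nonneg hab]
    simp
  · refine ⟨!![0, -1; 1, b], by simp [Matrix.det_fin_two_of],
      Or.inr ⟨(-(a + b)).toNat, 0, ?_⟩⟩
    have hab' : 0 ≤ -(a + b) := by omega
    simp only [BlowUpSeq, hirzebruchFan, h, Set.image_insert_eq, Set.image_singleton, matVec,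
      Int.toNat_of_nonneg hab']
    ext x
    simp
    tauto

theorem concl_minimal {S : Set (ℤ × ℤ)} (hS : FGood S) (hN : NoBD S)
    (hu : ((1, 0) : ℤ × ℤ) ∈ S) (hopp : ((-1, 0) : ℤ × ℤ) ∈ S ∨ ∀ x ∈ S, -x ∉ S) :
    FConcl S := by
  obtain ⟨p, w, s, h1, h2, h3, h4, h5⟩ := top_ray hS hN hu
  obtain ⟨p', w', s', g1, g2, g3, g4, g5⟩ := bottom_ray hS hN hu
  have ns : ((-1, 0) : ℤ × ℤ) ∈ S → ¬ s.2 < 0 := fun hm hs =>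
    h2.2.2.2 _ hm (by simp only [latDet]; constructor <;> linarith)
  have np : ((-1, 0) : ℤ × ℤ) ∈ S → ¬ 0 < p'.2 := fun hm hs =>
    g1.2.2.2 _ hm (by simp only [latDet]; constructor <;> linarith)
  by_cases hm : ((-1, 0) : ℤ × ℤ) ∈ S
  · obtain ⟨rfl, rfl, hw⟩ := h5.resolve_right (ns hm)
    obtain ⟨rfl, rfl, hw'⟩ := g5.resolve_right (np hm)
    apply concl_hirz w.1 w'.1
    have ew : w = (w.1, 1) := by rw [← hw]
    have ew' : w' = (w'.1, -1) := by rw [← hw']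
    rw [← ew, ← ew']
    ext x
    simp only [Set.mem_insert_iff, Set.mem_singleton_iff]
    constructor
    · intro hx
      have c1 := h1.2.2.2 x hx
      have c2 := h2.2.2.2 x hx
      have c3 := g1.2.2.2 x hx
      have c4 := g2.2.2.2 x hx
      have e1 : latDet (1, 0) x = x.2 := by simp [latDet]
      have e2 : latDet x (-1, 0) = x.2 := by simp [latDet]
      have e3 : latDet (-1, 0) x = - x.2 := by simp [latDet]
      have e4 : latDet x (1, 0) = - x.2 := by simp [latDet]
      have e5 := latDet_swap w x
      have e6 := latDet_swap w' x
      rcases lt_trichotomy x.2 0 with hx2 | hx2 | hx2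
      · right; right; right
        exact par_eq hS hx g1.2.2.1 (by omega) (by omega)
      · have hxw : latDet x w = x.1 := by simp [latDet, hw, hx2]
        have hxw' : latDet x w' = - x.1 := by simp [latDet, hw', hx2]
        have hx0 : x.1 ≠ 0 := by
          intro h0
          obtain ⟨y, hy⟩ := hS.2.2.1 x hx
          have := hy.2.2.1
          simp [latDet, h0, hx2] at this
        rcases lt_or_gt_of_ne hx0 with hx1 | hx1
        · right; right; left
          exact par_eq' hS hx g1.2.2.1 (by omega) (by omega)
        · left
          exact par_eq' hS hx h1.2.2.1 (by omega) (by omega)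
      · right; left
        exact par_eq hS hx h1.2.2.1 (by omega) (by omega)
    · rintro (rfl | rfl | rfl | rfl)
      exacts [hu, h1.2.1, hm, g1.2.1]
  · have hop := hopp.resolve_left hm
    have hs : s.2 < 0 := h5.resolve_left (by rintro ⟨rfl, -, -⟩; exact hm h2.2.1)
    have hp : 0 < p'.2 := g5.resolve_left (by rintro ⟨rfl, -, -⟩; exact hm g1.1)
    obtain ⟨rfl, rfl⟩ := pair_unique hS h2 g1 h3 hs hp g3
    have nz : ∀ a b c, FAdj S a b → FAdj S b c → latDet a c ≠ 0 := by
      intro a b c ha hb h0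
      have := sum_rel ha.2.2.1 hb.2.2.1
      rw [h0] at this
      refine hop a ha.1 ?_
      have : -a = c := by ext <;> simp <;> linarith
      rw [this]; exact hb.2.1
    have n1 := nz _ _ _ h1 h2
    have n2 := nz _ _ _ g1 g2
    obtain ⟨r1, r2⟩ := sum_rel h1.2.2.1 h2.2.2.1
    obtain ⟨q1, q2⟩ := sum_rel g1.2.2.1 g2.2.2.1
    generalize ha : latDet p s = a at *
    generalize hb : latDet w s' = b at *
    have d1 := h1.2.2.1
    have d2 := h2.2.2.1
    have e1 : latDet p s' = b * a - 1 := by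
      have : latDet p s' = b * latDet p s - latDet p w := by
        simp only [latDet]
        linear_combination p.1 * q2 - p.2 * q1
      rw [this, ha, d1]
    have e2 : latDet s' w = - b := by rw [latDet_swap, hb]
    have c := h1.2.2.2 s' g2.2.1
    rw [e1, e2] at c
    have hba : b * a ≤ 1 := by omega
    have ha' : a ≤ -1 := by omega
    have hb' : b ≤ -1 := by omega
    have hb1 : b = -1 := by nlinarith [mul_nonneg (show 0 ≤ -1 - a by omega) (show 0 ≤ -b by omega)]
    have ha1 : a = -1 := by subst hb1; omega
    subst ha1 hb1
    have es : s = (-p.1 - w.1, -p.2 - w.2) := by ext <;> simp only <;> linarith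
    have et : s' = p := by ext <;> linarith
    subst et
    exact concl_p2 hS h1 h2 g2 es

theorem concl_of_good : ∀ (n : ℕ) (S : Set (ℤ × ℤ)), FGood S → S.ncard = n → FConcl S := by
  intro n
  induction n using Nat.strong_induction_on with
  | _ n ih =>
  intro S hS hn
  by_cases hN : NoBD S
  · have : ∃ u ∈ S, (-u ∈ S ∨ ∀ x ∈ S, -x ∉ S) := by
      by_cases h : ∀ x ∈ S, -x ∉ S
      · obtain ⟨u, hu⟩ := hS.2.1
        exact ⟨u, hu, Or.inr h⟩
      · push Not at h
        obtain ⟨u, hu, hu'⟩ := h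
        exact ⟨u, hu, Or.inl hu'⟩
    obtain ⟨u, hu, hopp⟩ := this
    obtain ⟨w, hw⟩ := hS.2.2.1 u hu
    have hA := chart_det hw.2.2.1
    have e1 : matVec (chart u w) u = (1, 0) := by
      rw [chart_apply, hw.2.2.1]; simp [latDet]; ring
    have eneg : ∀ x, matVec (chart u w) (-x) = - matVec (chart u w) x := by
      intro x; ext <;> simp [matVec] <;> ring
    refine concl_image hA (concl_minimal (good_image hA hS) (nobd_image hA hN)
      ⟨u, hu, e1⟩ ?_)
    rcases hopp with h | h
    · left; exact ⟨-u, h, by rw [eneg, e1]; simp⟩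
    · right
      rintro _ ⟨x, hx, rfl⟩
      rw [← eneg, (matVec_inj hA).mem_set_image]
      exact h x hx
  · simp only [NoBD] at hN
    push Not at hN
    obtain ⟨p, v, s, hpv, hvs, hps⟩ := hN
    obtain ⟨hG, hadj, hv⟩ := blowdown hS hpv hvs hps
    have hlt : (S \ {v}).ncard < n := by
      rw [← hn]; exact Set.ncard_sdiff_singleton_lt_of_mem hpv.2.1 hS.1
    obtain ⟨A, hA, h⟩ := ih _ hlt _ hG rfl
    have step : BlowUpStep (matVec A '' (S \ {v})) (matVec A '' S) := by
      refine ⟨matVec A p, matVec A s, ((adj_image hA).2 hadj).adjacent, ?_⟩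
      rw [← matVec_add, ← hv, ← Set.image_singleton, ← Set.image_union,
        Set.sdiff_union_of_subset (by simpa using hpv.2.1)]
    refine ⟨A, hA, ?_⟩
    rcases h with ⟨m, hm⟩ | ⟨k, m, hm⟩
    · exact Or.inl ⟨m + 1, _, hm, step⟩
    · exact Or.inr ⟨k, m + 1, _, hm, step⟩

/-- For every smooth complete fan `S ⊆ ℤ²` there is a matrix
`A ∈ GL₂(ℤ)` such that `A·S` is obtained by a finite sequence of toric blow-up steps
from either `{(1,0),(0,1),(−1,−1)}` (the ray set of the fan of `ℂP²`) or from `Σ_n`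
for some `n ≥ 0` (the ray set of the fan of the Hirzebruch surface `F_n`): every
smooth compact toric surface is an iterated toric blow-up of `ℂP²` or of a Hirzebruch
surface. -/
theorem smooth_complete_fan_classification (S : Set (ℤ × ℤ))
    (hS : IsSmoothCompleteFan S) :
    ∃ A : Matrix (Fin 2) (Fin 2) ℤ, IsUnit A.det ∧
      ((∃ m : ℕ, BlowUpSeq m ({(1, 0), (0, 1), (-1, -1)} : Set (ℤ × ℤ)) (matVec A '' S)) ∨
        ∃ n m : ℕ, BlowUpSeq m (hirzebruchFan n) (matVec A '' S)) := by
  obtain ⟨A, hA, h⟩ := concl_of_good _ S (good_of_fan hS) rfl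
  exact ⟨A, by rw [hA]; exact isUnit_one, h⟩
end

section
/- For every natural number j, the set S_j is a smooth complete fan: its elements can be listed in cyclic angular order v_0, v_1, …, v_{d−1}, v_d = v_0 (with d = 2^{j+2}) so that det(v_i, v_{i+1}) = (v_i)₁(v_{i+1})₂ − (v_i)₂(v_{i+1})₁ = 1 for all i. (Each X_j is a smooth compact toric surface.) -/
theorem mediant_core (b : ℤ × ℤ) (hb : b = (0, 1)) : ∀ (E : List (ℤ × ℤ)) (a : ℤ × ℤ),
    0 < a.1 → 0 ≤ a.2 → (∀ e ∈ E, 0 < e.1 ∧ 0 < e.2) →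
    (a :: (E ++ [b])).IsChain (fun v w => latDet v w = 1) →
    ∃ E' : List (ℤ × ℤ), mediantInsert (a :: (E ++ [b])) = a :: (E' ++ [b]) ∧
      E'.length = 2 * E.length + 1 ∧ (∀ e ∈ E', 0 < e.1 ∧ 0 < e.2) ∧
      (a :: (E' ++ [b])).IsChain (fun v w => latDet v w = 1) := by
  intro E
  induction E with
  | nil =>
    intro a h1 h2 _ hc
    subst hb
    refine ⟨[a + (0, 1)], ?_, ?_, ?_, ?_⟩
    · simp [mediantInsert]
    · simp
    · intro e he
      simp only [List.mem_singleton] at he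
      subst he
      simp only [Prod.fst_add, Prod.snd_add]
      omega
    · simp [latDet] at hc ⊢
      constructor <;> linarith
  | cons c E ih =>
    intro a h1 h2 hE hc
    have hcpos := hE c (by simp)
    simp only [List.cons_append, List.isChain_cons_cons] at hc
    obtain ⟨E', he, hl, hp, hch⟩ := ih c hcpos.1 hcpos.2.le
      (fun e h => hE e (by simp [h])) hc.2
    refine ⟨(a + c) :: c :: E', ?_, ?_, ?_, ?_⟩
    · simp [mediantInsert, he]
    · simp [hl]; ring
    · intro e h
      simp only [List.mem_cons] at h
      rcases h with h | h | h
      · subst h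
        simp only [Prod.fst_add, Prod.snd_add]
        omega
      · subst h; exact hcpos
      · exact hp e h
    · simp only [List.cons_append, List.isChain_cons_cons]
      have := hc.1
      refine ⟨?_, ?_, hch⟩ <;> simp only [latDet, Prod.fst_add, Prod.snd_add] at this ⊢ <;>
        linarith

theorem rayList_shape (j : ℕ) : ∃ E : List (ℤ × ℤ), rayList j = (1, 0) :: (E ++ [(0, 1)]) ∧
    E.length + 1 = 2 ^ j ∧ (∀ e ∈ E, 0 < e.1 ∧ 0 < e.2) ∧
    (rayList j).IsChain (fun v w => latDet v w = 1) := by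
  induction j with
  | zero => exact ⟨[], by simp [rayList, latDet]⟩
  | succ j ih =>
    obtain ⟨E, h, hl, hp, hc⟩ := ih
    rw [h] at hc
    obtain ⟨E', he, hl', hp', hc'⟩ := mediant_core (0, 1) rfl E (1, 0) (by simp) (by simp) hp hc
    refine ⟨E', ?_, ?_, hp', ?_⟩
    · rw [rayList, h, he]
    · rw [pow_succ]; omega
    · rw [rayList, h, he]; exact hc'

/-- An auxiliary transitive strengthening of positivity of the determinant. -/
def AngLt (v w : ℤ × ℤ) : Prop := 0 < v.1 + v.2 ∧ 0 < w.1 + w.2 ∧ 0 < latDet v w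

theorem AngLt.trans' {a b c : ℤ × ℤ} (h : AngLt a b) (k : AngLt b c) : AngLt a c := by
  obtain ⟨h1, h2, h3⟩ := h
  obtain ⟨k1, k2, k3⟩ := k
  refine ⟨h1, k2, ?_⟩
  have e : (b.1 + b.2) * latDet a c = (c.1 + c.2) * latDet a b + (a.1 + a.2) * latDet b c := by
    simp only [latDet]; ring
  have : 0 < (b.1 + b.2) * latDet a c := by rw [e]; positivity
  exact (mul_pos_iff_of_pos_left h2).1 this

instance : IsTrans (ℤ × ℤ) AngLt := ⟨fun _ _ _ h k => h.trans' k⟩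

theorem zip_of_isChain {R : ℤ × ℤ → ℤ × ℤ → Prop} (y : ℤ × ℤ) : ∀ (t : List (ℤ × ℤ)) (x : ℤ × ℤ),
    (x :: (t ++ [y])).IsChain R → ∀ p ∈ (x :: t).zip (t ++ [y]), R p.1 p.2 := by
  intro t
  induction t with
  | nil => intro x h p hp; simp at h hp; subst hp; exact h
  | cons c t ih =>
    intro x h p hp
    simp only [List.cons_append, List.isChain_cons_cons] at h
    simp only [List.cons_append, List.zip_cons_cons, List.mem_cons] at hp
    rcases hp with hp | hp
    · subst hp; exact h.1
    · exact ih c h.2 p (by simpa using hp)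

theorem ray_chain (j : ℕ) : (rayList j).IsChain
    (fun v w => latDet v w = 1 ∧ AdjacentPair (raySet j) v w) := by
  obtain ⟨E, h, hl, hp, hc⟩ := rayList_shape j
  have hnn : ∀ q ∈ rayList j, 0 ≤ q.1 ∧ 0 ≤ q.2 ∧ 0 < q.1 + q.2 := by
    intro q hq
    rw [h] at hq
    simp only [List.mem_cons, List.mem_append, List.not_mem_nil, or_false] at hq
    rcases hq with rfl | hq | rfl
    · simp
    · have := hp q hq; omega
    · simp
  have hS : ∀ q ∈ rayList j, q ∈ raySet j := fun q hq => ⟨q, hq, 1, 1, by simp⟩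
  have hpw : (rayList j).Pairwise AngLt := by
    rw [← List.isChain_iff_pairwise]
    rw [List.isChain_iff_getElem] at hc ⊢
    intro i hi
    refine ⟨(hnn _ (List.getElem_mem _)).2.2, (hnn _ (List.getElem_mem _)).2.2, ?_⟩
    rw [hc i hi]; norm_num
  rw [List.pairwise_iff_getElem] at hpw
  rw [List.isChain_iff_getElem] at hc ⊢
  intro i hi
  have hdet := hc i hi
  refine ⟨hdet, hS _ (List.getElem_mem _), hS _ (List.getElem_mem _), by rw [hdet]; norm_num, ?_⟩
  have hv := hnn _ (List.getElem_mem (show i < (rayList j).length by omega))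
  have hw := hnn _ (List.getElem_mem hi)
  rintro u ⟨q, hq, ε₁, ε₂, h1, h2, rfl⟩ ⟨α, β, hα, hβ, e1, e2⟩
  have hqn := hnn q hq
  have key : ∀ u ∈ rayList j,
      ¬ (0 < latDet (rayList j)[i] u ∧ 0 < latDet u (rayList j)[i+1]) := by
    rintro u hu ⟨a1, a2⟩
    obtain ⟨k, hk, rfl⟩ := List.getElem_of_mem hu
    have anti : ∀ v w, latDet v w = - latDet w v := by intro v w; simp only [latDet]; ring
    rcases lt_trichotomy k i with hlt | heq | hgt
    · have := (hpw k i hk (by omega) hlt).2.2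
      rw [anti] at a1; omega
    · subst heq
      have := anti (rayList j)[k] (rayList j)[k]
      omega
    · rcases Nat.lt_or_ge (i+1) k with hlt | hge
      · have := (hpw (i+1) k hi hk hlt).2.2
        rw [anti] at a2; omega
      · have : k = i + 1 := by omega
        subst this
        have := anti (rayList j)[i+1] (rayList j)[i+1]
        omega
  generalize (rayList j)[i] = v at hdet hv e1 e2 key
  generalize (rayList j)[i+1] = w at hdet hw e1 e2 key
  have v1 : (0:ℝ) ≤ v.1 := by exact_mod_cast hv.1
  have v2 : (0:ℝ) ≤ v.2 := by exact_mod_cast hv.2.1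
  have w1 : (0:ℝ) ≤ w.1 := by exact_mod_cast hw.1
  have w2 : (0:ℝ) ≤ w.2 := by exact_mod_cast hw.2.1
  have u1 : 0 ≤ ε₁ * q.1 := by
    have : (0:ℝ) ≤ ((ε₁ * q.1 : ℤ) : ℝ) := by rw [e1]; positivity
    exact_mod_cast this
  have u2 : 0 ≤ ε₂ * q.2 := by
    have : (0:ℝ) ≤ ((ε₂ * q.2 : ℤ) : ℝ) := by rw [e2]; positivity
    exact_mod_cast this
  have f1 : ε₁ * q.1 = q.1 := by
    rcases h1 with rfl | rfl <;> omega
  have f2 : ε₂ * q.2 = q.2 := by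
    rcases h2 with rfl | rfl <;> omega
  simp only [f1, f2] at e1 e2
  have hdR : (v.1 : ℝ) * w.2 - v.2 * w.1 = 1 := by
    simp only [latDet] at hdet; exact_mod_cast hdet
  refine key q hq ?_
  constructor
  · have : (0:ℝ) < (latDet v q : ℤ) := by
      have : ((latDet v q : ℤ) : ℝ) = β := by
        simp only [latDet]; push_cast; rw [e1, e2]; linear_combination β * hdR
      rw [this]; exact hβ
    exact_mod_cast this
  · have : (0:ℝ) < (latDet q w : ℤ) := by
      have : ((latDet q w : ℤ) : ℝ) = α := by
        simp only [latDet]; push_cast; rw [e1, e2]; linear_combination α * hdR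
      rw [this]; exact hα
    exact_mod_cast this

/-- Sign change of both coordinates. -/
def sgnMap (s t : ℤ) (v : ℤ × ℤ) : ℤ × ℤ := (s * v.1, t * v.2)

theorem sgn_mem (j : ℕ) (s t : ℤ) (hs : s = 1 ∨ s = -1) (ht : t = 1 ∨ t = -1) (v : ℤ × ℤ)
    (hv : v ∈ raySet j) : sgnMap s t v ∈ raySet j := by
  obtain ⟨q, hq, a, b, ha, hb, rfl⟩ := hv
  refine ⟨q, hq, s * a, t * b, ?_, ?_, by simp [sgnMap, mul_assoc]⟩
  · rcases hs with rfl | rfl <;> rcases ha with rfl | rfl <;> simp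
  · rcases ht with rfl | rfl <;> rcases hb with rfl | rfl <;> simp

theorem sgn_cone (j : ℕ) (s t : ℤ) (hs : s = 1 ∨ s = -1) (ht : t = 1 ∨ t = -1) (v w : ℤ × ℤ)
    (h : ∀ u ∈ raySet j, ¬ ∃ α β : ℝ, 0 < α ∧ 0 < β ∧
      (u.1 : ℝ) = α * v.1 + β * w.1 ∧ (u.2 : ℝ) = α * v.2 + β * w.2) :
    ∀ u ∈ raySet j, ¬ ∃ α β : ℝ, 0 < α ∧ 0 < β ∧
      (u.1 : ℝ) = α * (sgnMap s t v).1 + β * (sgnMap s t w).1 ∧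
      (u.2 : ℝ) = α * (sgnMap s t v).2 + β * (sgnMap s t w).2 := by
  rintro u hu ⟨α, β, hα, hβ, e1, e2⟩
  refine h _ (sgn_mem j s t hs ht u hu) ⟨α, β, hα, hβ, ?_, ?_⟩
  · simp only [sgnMap] at e1 ⊢
    push_cast at e1 ⊢
    rw [e1]
    rcases hs with rfl | rfl <;> push_cast <;> ring
  · simp only [sgnMap] at e2 ⊢
    push_cast at e2 ⊢
    rw [e2]
    rcases ht with rfl | rfl <;> push_cast <;> ring

theorem chain_neg (j : ℕ) : ((rayList j).map (sgnMap (-1) (-1))).IsChain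
    (fun v w => latDet v w = 1 ∧ AdjacentPair (raySet j) v w) := by
  rw [List.isChain_map]
  refine (ray_chain j).imp ?_
  rintro v w ⟨hd, hv, hw, hp, hc⟩
  have e : latDet (sgnMap (-1) (-1) v) (sgnMap (-1) (-1) w) = latDet v w := by
    simp only [latDet, sgnMap]; ring
  exact ⟨e.trans hd, sgn_mem j _ _ (by simp) (by simp) v hv, sgn_mem j _ _ (by simp) (by simp) w hw,
    by rw [e]; exact hp, sgn_cone j _ _ (by simp) (by simp) v w hc⟩

theorem chain_refl (j : ℕ) (s t : ℤ) (hs : s = 1 ∨ s = -1) (ht : t = -s) :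
    ((rayList j).reverse.map (sgnMap s t)).IsChain
    (fun v w => latDet v w = 1 ∧ AdjacentPair (raySet j) v w) := by
  rw [List.isChain_map, List.isChain_reverse]
  refine (ray_chain j).imp ?_
  rintro v w ⟨hd, hv, hw, hp, hc⟩
  have ht' : t = 1 ∨ t = -1 := by omega
  have e : latDet (sgnMap s t w) (sgnMap s t v) = latDet v w := by
    subst ht
    rcases hs with rfl | rfl <;> simp only [latDet, sgnMap] <;> ring
  refine ⟨e.trans hd, sgn_mem j _ _ hs ht' w hw, sgn_mem j _ _ hs ht' v hv,
    by rw [e]; exact hp, ?_⟩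
  rintro u hu ⟨α, β, hα, hβ, e1, e2⟩
  exact sgn_cone j _ _ hs ht' v w hc u hu ⟨β, α, hβ, hα, by rw [e1]; ring, by rw [e2]; ring⟩

theorem ray_listing (j : ℕ) :
    ∃ l : List (ℤ × ℤ), l.Nodup ∧ l.length = 2 ^ (j + 2) ∧
        (∀ x, x ∈ raySet j ↔ x ∈ l) ∧
        ∀ p ∈ l.zip (l.rotate 1), latDet p.1 p.2 = 1 ∧ AdjacentPair (raySet j) p.1 p.2 := by
  obtain ⟨E, h, hl, hp, hc⟩ := rayList_shape j
  have c1 := ray_chain j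
  have c2 := chain_refl j (-1) 1 (by simp) (by simp)
  have c3 := chain_neg j
  have c4 := chain_refl j 1 (-1) (by simp) (by simp)
  have hnd : E.Nodup := by
    have hpw : (rayList j).Pairwise AngLt := by
      rw [← List.isChain_iff_pairwise]
      have hnn : ∀ q ∈ rayList j, 0 < q.1 + q.2 := by
        intro q hq
        rw [h] at hq
        simp only [List.mem_cons, List.mem_append, List.not_mem_nil, or_false] at hq
        rcases hq with rfl | hq | rfl
        · simp
        · have := hp q hq; omega
        · simp
      rw [List.isChain_iff_getElem] at hc ⊢
      intro i hi
      refine ⟨hnn _ (List.getElem_mem _), hnn _ (List.getElem_mem _), ?_⟩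
      rw [hc i hi]; norm_num
    rw [h, List.pairwise_cons, List.pairwise_append] at hpw
    refine hpw.2.1.imp ?_
    rintro a b ⟨_, _, hab⟩ rfl
    simp only [latDet] at hab
    linarith [mul_comm a.1 a.2]
  have inj : ∀ s t : ℤ, (s = 1 ∨ s = -1) → (t = 1 ∨ t = -1) →
      Function.Injective (sgnMap s t) := by
    rintro s t hs ht ⟨a, b⟩ ⟨c, d⟩ hh
    simp only [sgnMap, Prod.mk.injEq] at hh ⊢
    rcases hs with rfl | rfl <;> rcases ht with rfl | rfl <;> omega
  refine ⟨(1, 0) :: (E ++ (0, 1) :: (E.reverse.map (sgnMap (-1) 1) ++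
    (-1, 0) :: (E.map (sgnMap (-1) (-1)) ++ (0, -1) :: E.reverse.map (sgnMap 1 (-1))))),
    ?_, ?_, ?_, ?_⟩
  · have n2 := (List.nodup_reverse.2 hnd).map (inj (-1) 1 (by simp) (by simp))
    have n3 := hnd.map (inj (-1) (-1) (by simp) (by simp))
    have n4 := (List.nodup_reverse.2 hnd).map (inj 1 (-1) (by simp) (by simp))
    have p2 : ∀ e ∈ E.reverse.map (sgnMap (-1) 1), e.1 < 0 ∧ 0 < e.2 := by
      intro e he
      obtain ⟨q, hq, rfl⟩ := List.mem_map.1 he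
      have := hp q (List.mem_reverse.1 hq)
      simp only [sgnMap]; omega
    have p3 : ∀ e ∈ E.map (sgnMap (-1) (-1)), e.1 < 0 ∧ e.2 < 0 := by
      intro e he
      obtain ⟨q, hq, rfl⟩ := List.mem_map.1 he
      have := hp q hq
      simp only [sgnMap]; omega
    have p4 : ∀ e ∈ E.reverse.map (sgnMap 1 (-1)), 0 < e.1 ∧ e.2 < 0 := by
      intro e he
      obtain ⟨q, hq, rfl⟩ := List.mem_map.1 he
      have := hp q (List.mem_reverse.1 hq)
      simp only [sgnMap]; omega
    generalize E.reverse.map (sgnMap (-1) 1) = A at *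
    generalize E.map (sgnMap (-1) (-1)) = B at *
    generalize E.reverse.map (sgnMap 1 (-1)) = C at *
    clear h hl hc c1 c2 c3 c4 inj
    have k1 : ∀ t : ℤ × ℤ, (t.1 ≤ 0 ∨ t.2 ≤ 0) → t ∉ E := fun t ht hm => by
      have := hp t hm; omega
    have k2 : ∀ t : ℤ × ℤ, (0 ≤ t.1 ∨ t.2 ≤ 0) → t ∉ A := fun t ht hm => by
      have := p2 t hm; omega
    have k3 : ∀ t : ℤ × ℤ, (0 ≤ t.1 ∨ 0 ≤ t.2) → t ∉ B := fun t ht hm => by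
      have := p3 t hm; omega
    have k4 : ∀ t : ℤ × ℤ, (t.1 ≤ 0 ∨ 0 ≤ t.2) → t ∉ C := fun t ht hm => by
      have := p4 t hm; omega
    simp only [List.nodup_cons, List.nodup_append, List.mem_cons, List.mem_append]
    refine ⟨by simp [k1, k2, k3, k4], hnd, ⟨by simp [k2, k3, k4], n2, ⟨by simp [k3, k4], n3,
      ⟨by simp [k4], n4⟩, ?_⟩, ?_⟩, ?_⟩
    · rintro a ha b hb rfl
      have := p3 a ha
      rcases hb with rfl | hb
      · simp at this
      · have := p4 a hb; omega
    · rintro a ha b hb rfl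
      have := p2 a ha
      rcases hb with rfl | hb | rfl | hb
      · simp at this
      · have := p3 a hb; omega
      · simp at this
      · have := p4 a hb; omega
    · rintro a ha b hb rfl
      have := hp a ha
      rcases hb with rfl | hb | rfl | hb | rfl | hb
      · simp at this
      · have := p2 a hb; omega
      · simp at this
      · have := p3 a hb; omega
      · simp at this
      · have := p4 a hb; omega
  · simp only [List.length_cons, List.length_append, List.length_map, List.length_reverse]
    rw [pow_add]; omega
  · intro x
    have hx : x ∈ raySet j ↔ ∃ q ∈ rayList j, ∃ ε₁ ε₂ : ℤ, (ε₁ = 1 ∨ ε₁ = -1) ∧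
      (ε₂ = 1 ∨ ε₂ = -1) ∧ x = (ε₁ * q.1, ε₂ * q.2) := Iff.rfl
    rw [hx, h]
    simp only [List.mem_cons, List.mem_append, List.mem_map, List.mem_reverse, List.not_mem_nil,
      or_false]
    constructor
    · rintro ⟨q, hq, a, b, ha, hb, rfl⟩
      rcases hq with rfl | hq | rfl
      · rcases ha with rfl | rfl <;> simp
      · rcases ha with rfl | rfl <;> rcases hb with rfl | rfl
        · right; left; simpa using hq
        · right; right; right; right; right; right; right; exact ⟨q, hq, rfl⟩
        · right; right; right; left; exact ⟨q, hq, rfl⟩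
        · right; right; right; right; right; left; exact ⟨q, hq, rfl⟩
      · rcases hb with rfl | rfl <;> simp
    · rintro (rfl | hq | rfl | ⟨q, hq, rfl⟩ | rfl | ⟨q, hq, rfl⟩ | rfl | ⟨q, hq, rfl⟩)
      · exact ⟨(1, 0), by simp, 1, 1, by simp⟩
      · exact ⟨x, by simp [hq], 1, 1, by simp⟩
      · exact ⟨(0, 1), by simp, 1, 1, by simp⟩
      · exact ⟨q, by simp [hq], -1, 1, by simp [sgnMap]⟩
      · exact ⟨(1, 0), by simp, -1, 1, by simp⟩
      · exact ⟨q, by simp [hq], -1, -1, by simp [sgnMap]⟩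
      · exact ⟨(0, 1), by simp, 1, -1, by simp⟩
      · exact ⟨q, by simp [hq], 1, -1, by simp [sgnMap]⟩
  · rw [List.rotate_cons_succ, List.rotate_zero]
    refine zip_of_isChain (R := fun v w => latDet v w = 1 ∧ AdjacentPair (raySet j) v w)
      _ _ _ ?_
    rw [h] at c1 c2 c3 c4
    have s2 : (((1, 0) :: (E ++ [(0, 1)])).reverse.map (sgnMap (-1) 1)) =
        (0, 1) :: (E.reverse.map (sgnMap (-1) 1) ++ [(-1, 0)]) := by simp [sgnMap]
    have s3 : (((1, 0) :: (E ++ [(0, 1)])).map (sgnMap (-1) (-1))) =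
        (-1, 0) :: (E.map (sgnMap (-1) (-1)) ++ [(0, -1)]) := by simp [sgnMap]
    have s4 : (((1, 0) :: (E ++ [(0, 1)])).reverse.map (sgnMap 1 (-1))) =
        (0, -1) :: (E.reverse.map (sgnMap 1 (-1)) ++ [(1, 0)]) := by simp [sgnMap]
    rw [s2] at c2
    rw [s3] at c3
    rw [s4] at c4
    have glue : ∀ {R : ℤ × ℤ → ℤ × ℤ → Prop} {a b : ℤ × ℤ} {l m : List (ℤ × ℤ)},
        (a :: (l ++ [b])).IsChain R → (b :: m).IsChain R → (a :: (l ++ b :: m)).IsChain R := by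
      intro R a b l m h1 h2
      have := (List.isChain_split (R := R) (l₁ := a :: l) (c := b) (l₂ := m)).2
        ⟨by simpa using h1, h2⟩
      simpa using this
    have := glue c1 (glue c2 (glue c3 c4))
    simpa only [List.append_assoc, List.cons_append] using this

/-- For every natural number `j`, the set `S_j` is a smooth complete
fan: its elements can be listed in cyclic angular order `v_0, …, v_{d−1}, v_d = v_0`
with `d = 2^{j+2}` so that `det(v_i, v_{i+1}) = 1` for all `i`.  (Each `X_j` is a
smooth compact toric surface.) -/
theorem raySet_isSmoothCompleteFan (j : ℕ) :
    IsSmoothCompleteFan (raySet j) ∧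
      ∃ l : List (ℤ × ℤ), l.Nodup ∧ l.length = 2 ^ (j + 2) ∧
        (∀ x, x ∈ raySet j ↔ x ∈ l) ∧
        ∀ p ∈ l.zip (l.rotate 1), latDet p.1 p.2 = 1 ∧ AdjacentPair (raySet j) p.1 p.2 := by
  obtain ⟨l, h1, h2, h3, h4⟩ := ray_listing j
  refine ⟨⟨l, h1, ?_, h3, h4⟩, l, h1, h2, h3, h4⟩
  rw [h2, pow_add]
  have : 0 < 2 ^ j := by positivity
  omega
end

section
/- For every natural number n, Σ_n = {(0,−1),(1,0),(0,1),(−1,−n)} is contained in S_n, and there exists a sequence of exactly 2^{n+2} − 4 toric blow-up steps taking Σ_n to S_n. (The surface X_n is obtained from the Hirzebruch surface F_n by exactly 2^{n+2} − 4 toric blow-ups, and this count is sharp for the construction since each toric blow-up step adds exactly one ray.) -/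
/-- Rays strictly between `v` and `w` after `j` rounds of mediant insertion. -/
def medSet : ℕ → ℤ × ℤ → ℤ × ℤ → Set (ℤ × ℤ)
  | 0, _, _ => ∅
  | j + 1, v, w => {v + w} ∪ medSet j v (v + w) ∪ medSet j (v + w) w

theorem medSet_det (j : ℕ) : ∀ v w : ℤ × ℤ, 0 < latDet v w → ∀ u ∈ medSet j v w,
    0 < latDet v u ∧ 0 < latDet u w := by
  induction j with
  | zero => intro v w _ u hu; exact absurd hu (Set.notMem_empty u)
  | succ j ih =>
    intro v w h u hu
    have h1 : 0 < latDet v (v + w) := by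
      simp only [latDet, Prod.fst_add, Prod.snd_add] at h ⊢; linarith
    have h2 : 0 < latDet (v + w) w := by
      simp only [latDet, Prod.fst_add, Prod.snd_add] at h ⊢; linarith
    rcases hu with (hu | hu) | hu
    · rw [Set.mem_singleton_iff] at hu
      subst hu
      exact ⟨h1, h2⟩
    · obtain ⟨a, b⟩ := ih _ _ h1 u hu
      refine ⟨a, ?_⟩
      simp only [latDet, Prod.fst_add, Prod.snd_add] at a b h ⊢
      linarith
    · obtain ⟨a, b⟩ := ih _ _ h2 u hu
      refine ⟨?_, b⟩
      simp only [latDet, Prod.fst_add, Prod.snd_add] at a b h ⊢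
      linarith

theorem adj_of_det {S : Set (ℤ × ℤ)} {v w : ℤ × ℤ} (hv : v ∈ S) (hw : w ∈ S)
    (h : 0 < latDet v w) (hS : ∀ u ∈ S, 0 < latDet v u → 0 < latDet u w → False) :
    AdjacentPair S v w := by
  refine ⟨hv, hw, h, ?_⟩
  rintro u hu ⟨α, β, hα, hβ, e1, e2⟩
  have hR : (0 : ℝ) < v.1 * w.2 - v.2 * w.1 := by
    have := h
    unfold latDet at this
    exact_mod_cast this
  refine hS u hu ?_ ?_
  · have : (0 : ℝ) < v.1 * u.2 - v.2 * u.1 := by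
      rw [e1, e2]
      have := mul_pos hβ hR
      linarith
    unfold latDet
    exact_mod_cast this
  · have : (0 : ℝ) < u.1 * w.2 - u.2 * w.1 := by
      rw [e1, e2]
      have := mul_pos hα hR
      linarith
    unfold latDet
    exact_mod_cast this

theorem AdjacentPair.det {S : Set (ℤ × ℤ)} {v w : ℤ × ℤ} (hA : AdjacentPair S v w) :
    ∀ u ∈ S, 0 < latDet v u → 0 < latDet u w → False := by
  obtain ⟨_, _, h, hS⟩ := hA
  intro u hu h1 h2
  unfold latDet at h h1 h2
  have hR : (0 : ℝ) < v.1 * w.2 - v.2 * w.1 := by exact_mod_cast h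
  have h1R : (0 : ℝ) < v.1 * u.2 - v.2 * u.1 := by exact_mod_cast h1
  have h2R : (0 : ℝ) < u.1 * w.2 - u.2 * w.1 := by exact_mod_cast h2
  refine hS u hu ⟨_, _, div_pos h2R hR, div_pos h1R hR, ?_, ?_⟩
  · rw [div_mul_eq_mul_div, div_mul_eq_mul_div, ← add_div, eq_div_iff hR.ne']
    ring
  · rw [div_mul_eq_mul_div, div_mul_eq_mul_div, ← add_div, eq_div_iff hR.ne']
    ring

theorem BlowUpSeq.comp {a b : ℕ} {S R T : Set (ℤ × ℤ)} (h1 : BlowUpSeq a S R)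
    (h2 : BlowUpSeq b R T) : BlowUpSeq (a + b) S T := by
  induction b generalizing T with
  | zero =>
    have h2' : T = R := h2
    subst h2'
    exact h1
  | succ b ih =>
    obtain ⟨Q, hQ, hs⟩ := h2
    exact ⟨Q, ih hQ, hs⟩

theorem BlowUpSeq.mono {a : ℕ} {S T : Set (ℤ × ℤ)} (h : BlowUpSeq a S T) : S ⊆ T := by
  induction a generalizing T with
  | zero =>
    have h' : T = S := h
    rw [h']
  | succ a ih =>
    obtain ⟨Q, hQ, v, w, _, rfl⟩ := h
    exact (ih hQ).trans Set.subset_union_left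

theorem seq_one {S : Set (ℤ × ℤ)} {v w : ℤ × ℤ} (hA : AdjacentPair S v w) :
    BlowUpSeq 1 S (S ∪ {v + w}) :=
  ⟨S, rfl, v, w, hA, rfl⟩

/-- Refining one cone. -/
theorem seq_refine (j : ℕ) : ∀ (S : Set (ℤ × ℤ)) (v w : ℤ × ℤ), AdjacentPair S v w →
    BlowUpSeq (2 ^ j - 1) S (S ∪ medSet j v w) := by
  induction j with
  | zero =>
    intro S v w _
    change S ∪ ∅ = S
    simp
  | succ j ih =>
    intro S v w hA
    have hd := hA.det
    obtain ⟨hv, hw, h, _⟩ := hA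
    have h1 : 0 < latDet v (v + w) := by
      simp only [latDet, Prod.fst_add, Prod.snd_add] at h ⊢; linarith
    have h2 : 0 < latDet (v + w) w := by
      simp only [latDet, Prod.fst_add, Prod.snd_add] at h ⊢; linarith
    have A1 : AdjacentPair (S ∪ {v + w}) v (v + w) := by
      refine adj_of_det (Or.inl hv) (Or.inr rfl) h1 ?_
      rintro u (hu | hu) a b
      · refine hd u hu a ?_
        simp only [latDet, Prod.fst_add, Prod.snd_add] at a b ⊢
        linarith
      · rw [Set.mem_singleton_iff] at hu
        subst hu
        simp only [latDet] at b
        linarith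
    have A2 : AdjacentPair (S ∪ {v + w} ∪ medSet j v (v + w)) (v + w) w := by
      refine adj_of_det (Or.inl (Or.inr rfl)) (Or.inl (Or.inl hw)) h2 ?_
      rintro u ((hu | hu) | hu) a b
      · refine hd u hu ?_ b
        simp only [latDet, Prod.fst_add, Prod.snd_add] at a b ⊢
        linarith
      · rw [Set.mem_singleton_iff] at hu
        subst hu
        simp only [latDet] at a
        linarith
      · have := (medSet_det j _ _ h1 u hu).2
        simp only [latDet, Prod.fst_add, Prod.snd_add] at a this
        linarith
    have := ((seq_one (adj_of_det hv hw h hd)).comp (ih _ _ _ A1)).comp (ih _ _ _ A2)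
    have e : 1 + (2 ^ j - 1) + (2 ^ j - 1) = 2 ^ (j + 1) - 1 := by
      have : 0 < 2 ^ j := by positivity
      rw [pow_succ]; omega
    rw [e] at this
    convert this using 1
    simp only [medSet, Set.union_assoc]

/-- The left half: from the ray `(-1, c - n)` recover `(-1, c)` and the refinement. -/
theorem seq_left (n : ℕ) : ∀ (S : Set (ℤ × ℤ)) (c : ℤ),
    AdjacentPair S (0, 1) (-1, c - n) →
    BlowUpSeq (2 ^ n - 1) S (S ∪ ({(-1, c)} ∪ medSet n (-1, c) (0, -1))) := by
  induction n with
  | zero =>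
    intro S c hA
    have h2 := hA.2.1
    change S ∪ ({(-1, c)} ∪ ∅) = S
    simp at h2 ⊢
    exact h2
  | succ n ih =>
    intro S c hA
    have hA' : AdjacentPair S (0, 1) (-1, (c - 1) - n) := by
      convert hA using 2
      push_cast; ring
    have hd := hA'.det
    have s1 := ih S (c - 1) hA'
    have hn : (0 : ℤ) ≤ n := Int.natCast_nonneg n
    have hdet : 0 < latDet (-1, c - 1) (0, -1) := by simp [latDet]
    have hdet' : 0 < latDet (0, 1) (-1, c - 1) := by simp [latDet]
    have A1 : AdjacentPair (S ∪ ({(-1, c - 1)} ∪ medSet n (-1, c - 1) (0, -1)))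
        (0, 1) (-1, c - 1) := by
      refine adj_of_det (Or.inl hA.1) (Or.inr (Or.inl rfl)) hdet' ?_
      rintro u (hu | hu | hu) a b
      · refine hd u hu a ?_
        simp only [latDet] at a b ⊢
        nlinarith
      · rw [Set.mem_singleton_iff] at hu
        subst hu
        simp only [latDet] at b
        linarith
      · have := (medSet_det n _ _ hdet u hu).1
        simp only [latDet] at b this
        linarith
    have s2 := seq_one A1
    have e0 : ((0, 1) : ℤ × ℤ) + (-1, c - 1) = (-1, c) := by simp
    have e1 : ((-1, c) : ℤ × ℤ) + (0, -1) = (-1, c - 1) := by simp; ring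
    rw [e0] at s2
    have A2 : AdjacentPair (S ∪ ({(-1, c - 1)} ∪ medSet n (-1, c - 1) (0, -1)) ∪ {(-1, c)})
        (-1, c) (-1, c - 1) := by
      refine adj_of_det (Or.inr rfl) (Or.inl (Or.inr (Or.inl rfl))) (by simp [latDet]) ?_
      rintro u ((hu | hu | hu) | hu) a b
      · simp only [latDet] at a b
        refine hd u hu ?_ ?_
        · simp only [latDet]
          linarith
        · simp only [latDet]
          have : 0 < -u.1 := by linarith
          nlinarith
      · rw [Set.mem_singleton_iff] at hu
        subst hu
        simp only [latDet] at b
        linarith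
      · have := (medSet_det n _ _ hdet u hu).1
        simp only [latDet] at b this
        linarith
      · rw [Set.mem_singleton_iff] at hu
        subst hu
        simp only [latDet] at a
        linarith
    have := (s1.comp s2).comp (seq_refine n _ _ _ A2)
    have e : 2 ^ n - 1 + 1 + (2 ^ n - 1) = 2 ^ (n + 1) - 1 := by
      have : 0 < 2 ^ n := by positivity
      rw [pow_succ]; omega
    rw [e] at this
    convert this using 1
    simp only [medSet, e1]
    ext x
    simp only [Set.mem_union]
    tauto

theorem medSet_comm (j : ℕ) : ∀ v w : ℤ × ℤ, medSet j v w = medSet j w v := by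
  induction j with
  | zero => intro v w; rfl
  | succ j ih =>
    intro v w
    simp only [medSet]
    rw [ih v (v + w), ih (v + w) w, add_comm w v, Set.union_assoc, Set.union_assoc,
      Set.union_comm (medSet j (v + w) v)]

theorem medSet_map (f : ℤ × ℤ →+ ℤ × ℤ) (j : ℕ) : ∀ v w : ℤ × ℤ,
    medSet j (f v) (f w) = f '' medSet j v w := by
  induction j with
  | zero => intro v w; simp [medSet]
  | succ j ih =>
    intro v w
    simp only [medSet, Set.image_union, Set.image_singleton, ← ih, map_add]

/-- All rays obtained from a list after `j` rounds of insertion. -/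
def listSet (j : ℕ) : List (ℤ × ℤ) → Set (ℤ × ℤ)
  | [] => ∅
  | [a] => {a}
  | a :: b :: t => {a} ∪ medSet j a b ∪ listSet j (b :: t)

theorem listSet_zero : ∀ l, listSet 0 l = {x | x ∈ l}
  | [] => by simp [listSet]
  | [a] => by simp [listSet]
  | a :: b :: t => by
    rw [listSet, listSet_zero (b :: t)]
    ext x
    simp [medSet]

theorem mediantInsert_cons (b : ℤ × ℤ) (t : List (ℤ × ℤ)) :
    ∃ s, mediantInsert (b :: t) = b :: s := by
  cases t with
  | nil => exact ⟨_, rfl⟩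
  | cons c t => exact ⟨_, rfl⟩

theorem listSet_mediant (j : ℕ) : ∀ l, listSet j (mediantInsert l) = listSet (j + 1) l
  | [] => rfl
  | [a] => rfl
  | a :: b :: t => by
    have ih := listSet_mediant j (b :: t)
    obtain ⟨s, hs⟩ := mediantInsert_cons b t
    rw [hs] at ih
    rw [mediantInsert, hs]
    simp only [listSet, medSet]
    rw [← ih]
    ext x
    simp only [Set.mem_union]
    tauto

theorem listSet_rayList (n : ℕ) : ∀ k, listSet k (rayList n) = listSet (k + n) (rayList 0) := by
  induction n with
  | zero => intro k; rfl
  | succ n ih =>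
    intro k
    have h : rayList (n + 1) = mediantInsert (rayList n) := rfl
    rw [h, listSet_mediant, ih]
    congr 1
    omega

theorem mem_rayList (n : ℕ) (x : ℤ × ℤ) :
    x ∈ rayList n ↔ x = (1, 0) ∨ x ∈ medSet n (1, 0) (0, 1) ∨ x = (0, 1) := by
  have h : x ∈ listSet 0 (rayList n) ↔ x ∈ listSet (0 + n) (rayList 0) := by
    rw [listSet_rayList]
  rw [listSet_zero, zero_add] at h
  simp only [rayList, listSet, Set.mem_union, Set.mem_singleton_iff, Set.mem_ofPred_eq] at h
  rw [h, or_assoc]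

/-- Coordinatewise scaling. -/
def signMap (a b : ℤ) : ℤ × ℤ →+ ℤ × ℤ where
  toFun p := (a * p.1, b * p.2)
  map_zero' := by simp
  map_add' p q := by simp [mul_add]

theorem medSet_sign (a b : ℤ) (n : ℕ) :
    medSet n (a, 0) (0, b) = {p | ∃ q ∈ medSet n (1, 0) (0, 1), p = (a * q.1, b * q.2)} := by
  have := medSet_map (signMap a b) n (1, 0) (0, 1)
  have e1 : signMap a b (1, 0) = (a, 0) := by simp [signMap]
  have e2 : signMap a b (0, 1) = (0, b) := by simp [signMap]
  rw [e1, e2] at this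
  rw [this]
  ext p
  simp only [Set.mem_image, Set.mem_ofPred_eq]
  constructor
  · rintro ⟨q, hq, rfl⟩; exact ⟨q, hq, rfl⟩
  · rintro ⟨q, hq, rfl⟩; exact ⟨q, hq, rfl⟩

theorem raySet_eq (n : ℕ) (p : ℤ × ℤ) : p ∈ raySet n ↔
    p = (1, 0) ∨ p = (0, 1) ∨ p = (-1, 0) ∨ p = (0, -1) ∨ p ∈ medSet n (1, 0) (0, 1) ∨
    p ∈ medSet n (-1, 0) (0, 1) ∨ p ∈ medSet n (-1, 0) (0, -1) ∨ p ∈ medSet n (1, 0) (0, -1) := by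
  rw [medSet_sign (-1) 1, medSet_sign (-1) (-1), medSet_sign 1 (-1)]
  have h11 : p ∈ medSet n (1, 0) (0, 1) ↔
      ∃ q ∈ medSet n (1, 0) (0, 1), p = (1 * q.1, 1 * q.2) := by simp
  rw [h11]
  simp only [raySet, Set.mem_ofPred_eq, mem_rayList]
  constructor
  · rintro ⟨q, hq, a, b, ha, hb, rfl⟩
    rcases hq with rfl | hq | rfl
    · rcases ha with rfl | rfl <;> simp
    · rcases ha with rfl | rfl <;> rcases hb with rfl | rfl
      · exact Or.inr (Or.inr (Or.inr (Or.inr (Or.inl ⟨q, hq, rfl⟩))))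
      · exact Or.inr (Or.inr (Or.inr (Or.inr (Or.inr (Or.inr (Or.inr ⟨q, hq, rfl⟩))))))
      · exact Or.inr (Or.inr (Or.inr (Or.inr (Or.inr (Or.inl ⟨q, hq, rfl⟩)))))
      · exact Or.inr (Or.inr (Or.inr (Or.inr (Or.inr (Or.inr (Or.inl ⟨q, hq, rfl⟩))))))
    · rcases hb with rfl | rfl <;> simp
  · rintro (rfl | rfl | rfl | rfl | ⟨q, hq, rfl⟩ | ⟨q, hq, rfl⟩ | ⟨q, hq, rfl⟩ | ⟨q, hq, rfl⟩)
    · exact ⟨(1, 0), Or.inl rfl, 1, 1, by simp⟩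
    · exact ⟨(0, 1), Or.inr (Or.inr rfl), 1, 1, by simp⟩
    · exact ⟨(1, 0), Or.inl rfl, -1, 1, by simp⟩
    · exact ⟨(0, 1), Or.inr (Or.inr rfl), 1, -1, by simp⟩
    · exact ⟨q, Or.inr (Or.inl hq), 1, 1, by simp⟩
    · exact ⟨q, Or.inr (Or.inl hq), -1, 1, by simp⟩
    · exact ⟨q, Or.inr (Or.inl hq), -1, -1, by simp⟩
    · exact ⟨q, Or.inr (Or.inl hq), 1, -1, by simp⟩

theorem hirzebruch_seq (n : ℕ) :
    BlowUpSeq (2 ^ (n + 2) - 4) (hirzebruchFan n) (raySet n) := by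
  have hn : (0 : ℤ) ≤ n := Int.natCast_nonneg n
  have d1 : 0 < latDet (-1, 0) (0, -1) := by simp [latDet]
  have d2 : 0 < latDet (0, 1) (-1, 0) := by simp [latDet]
  have d3 : 0 < latDet (1, 0) (0, 1) := by simp [latDet]
  have d4 : 0 < latDet (0, -1) (1, 0) := by simp [latDet]
  have A1 : AdjacentPair (hirzebruchFan n) (0, 1) (-1, 0 - n) := by
    refine adj_of_det (by simp [hirzebruchFan]) (by simp [hirzebruchFan]) (by simp [latDet]) ?_
    rintro u (rfl | rfl | rfl | rfl) a b <;> simp [latDet] at a b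
  have s1 := seq_left n _ 0 A1
  set S1 := hirzebruchFan n ∪ ({(-1, 0)} ∪ medSet n (-1, 0) (0, -1)) with hS1
  have A2 : AdjacentPair S1 (0, 1) (-1, 0) := by
    refine adj_of_det (by simp [hS1, hirzebruchFan]) (by simp [hS1]) d2 ?_
    rintro u ((rfl | rfl | rfl | rfl) | rfl | hu) a b
    all_goals first
      | (have := medSet_det n _ _ d1 u hu; simp only [latDet] at a b this; linarith)
      | (simp only [latDet] at a b; linarith)
  have s2 := seq_refine n _ _ _ A2
  set S2 := S1 ∪ medSet n (0, 1) (-1, 0) with hS2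
  have A3 : AdjacentPair S2 (1, 0) (0, 1) := by
    refine adj_of_det (by simp [hS2, hS1, hirzebruchFan]) (by simp [hS2, hS1, hirzebruchFan]) d3 ?_
    rintro u (((rfl | rfl | rfl | rfl) | rfl | hu) | hu) a b
    all_goals first
      | (have := medSet_det n _ _ d1 u hu; simp only [latDet] at a b this; linarith)
      | (have := medSet_det n _ _ d2 u hu; simp only [latDet] at a b this; linarith)
      | (simp only [latDet] at a b; linarith)
  have s3 := seq_refine n _ _ _ A3
  set S3 := S2 ∪ medSet n (1, 0) (0, 1) with hS3
  have A4 : AdjacentPair S3 (0, -1) (1, 0) := by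
    refine adj_of_det (by simp [hS3, hS2, hS1, hirzebruchFan])
      (by simp [hS3, hS2, hS1, hirzebruchFan]) d4 ?_
    rintro u ((((rfl | rfl | rfl | rfl) | rfl | hu) | hu) | hu) a b
    all_goals first
      | (have := medSet_det n _ _ d1 u hu; simp only [latDet] at a b this; linarith)
      | (have := medSet_det n _ _ d2 u hu; simp only [latDet] at a b this; linarith)
      | (have := medSet_det n _ _ d3 u hu; simp only [latDet] at a b this; linarith)
      | (simp only [latDet] at a b; linarith)
  have s4 := seq_refine n _ _ _ A4
  have s := ((s1.comp s2).comp s3).comp s4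
  have e : 2 ^ n - 1 + (2 ^ n - 1) + (2 ^ n - 1) + (2 ^ n - 1) = 2 ^ (n + 2) - 4 := by
    have : 0 < 2 ^ n := by positivity
    rw [pow_add]; omega
  rw [e] at s
  -- the ray `(-1, -n)` lies in the third quadrant refinement
  have key : ∀ (m : ℕ) (c : ℤ),
      ((-1, c - m) : ℤ × ℤ) = (-1, c) ∨ (-1, c - m) ∈ medSet m (-1, c) (0, -1) := by
    intro m
    induction m with
    | zero => intro c; left; simp
    | succ m ih =>
      intro c
      right
      have e1 : ((-1, c) : ℤ × ℤ) + (0, -1) = (-1, c - 1) := by simp; ring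
      have e2 : ((-1, c - (m + 1 : ℕ)) : ℤ × ℤ) = (-1, (c - 1) - m) := by
        congr 1; push_cast; ring
      rw [medSet, e1, e2]
      rcases ih (c - 1) with h | h
      · exact Or.inl (Or.inl h)
      · exact Or.inr h
  have hk := key n 0
  rw [zero_sub] at hk
  convert s using 1
  ext p
  rw [raySet_eq, medSet_comm n (0, -1), medSet_comm n (-1, 0) (0, 1)]
  simp only [hS3, hS2, hS1, hirzebruchFan, Set.mem_union, Set.mem_insert_iff,
    Set.mem_singleton_iff]
  constructor
  · tauto
  · rintro (((((h | h | h | h) | h) | h) | h) | h)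
    on_goal 4 => subst h
    all_goals tauto

/-- For every natural number `n`, `Σ_n ⊆ S_n`, and there is a sequence
of exactly `2^{n+2} − 4` toric blow-up steps taking `Σ_n` to `S_n`: the surface `X_n`
is obtained from the Hirzebruch surface `F_n` by exactly `2^{n+2} − 4` toric
blow-ups. -/
theorem hirzebruchFan_to_raySet (n : ℕ) :
    hirzebruchFan n ⊆ raySet n ∧ BlowUpSeq (2 ^ (n + 2) - 4) (hirzebruchFan n) (raySet n) :=
  ⟨(hirzebruch_seq n).mono, hirzebruch_seq n⟩
end
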